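/- arXiv:1705.06194 — 10 statements merged into one kernel-verified Lean document; each statement's English description precedes it below -/
import Mathlib

section
/- Let F be a subset of ℝ which is not always of 1st category, i.e., there exists a perfect set P ⊆ ℝ such that F ∩ P is non-meager in the subspace topology of P. Then F can be written as the union of two disjoint subsets F₁ and F₂ such that there is no Borel set B ⊆ ℝ with F₁ ⊆ B and B ∩ F₂ = ∅. -/
open Set Topology TopologicalSpace in
/-- A meagre set avoids a countable intersection of dense open sets. -/
lemma IsMeagre.exists_seq_aux {X : Type*} [TopologicalSpace X] {s : Set X} (hs : IsMeagre s) :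
    ∃ D : ℕ → Set X, (∀ n, IsOpen (D n)) ∧ (∀ n, Dense (D n)) ∧ ∀ x ∈ s, ∃ n, x ∉ D n := by
  obtain ⟨S, hSo, hSd, hSc, hS⟩ := mem_residual_iff.1 hs
  obtain ⟨D, hD⟩ := (hSc.insert univ).exists_eq_range (insert_nonempty _ _)
  have hm : ∀ n, D n ∈ insert univ S := fun n => hD ▸ mem_range_self n
  refine ⟨D, fun n => ?_, fun n => ?_, fun x hx => ?_⟩
  · rcases hm n with h | h
    · rw [h]; exact isOpen_univ
    · exact hSo _ h
  · rcases hm n with h | h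
    · rw [h]; exact dense_univ
    · exact hSd _ h
  · by_contra! hc
    refine hS (mem_sInter.2 fun t ht => ?_) hx
    have : t ∈ range D := hD ▸ mem_insert_of_mem _ ht
    obtain ⟨n, rfl⟩ := this
    exact hc n

open Set Topology TopologicalSpace in
/-- Closed sets with dense complement are meagre. -/
lemma isMeagre_compl_aux {X : Type*} [TopologicalSpace X] {s : Set X} (ho : IsOpen s)
    (hd : Dense s) : IsMeagre sᶜ := by
  rw [IsMeagre, compl_compl]
  exact residual_of_dense_open ho hd

open Set Topology TopologicalSpace in
/-- Core argument, for a set all of whose initial segments are meagre. -/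
lemma lusin_core {X : Type*} [TopologicalSpace X] [SecondCountableTopology X]
    (r : X → X → Prop) (htri : ∀ x y, r x y ∨ x = y ∨ r y x)
    (hsing : ∀ x : X, IsMeagre ({x} : Set X)) (F : Set X) (hF : ¬ IsMeagre F)
    (hseg : ∀ x ∈ F, IsMeagre {y | y ∈ F ∧ r y x})
    (H : ∀ A ⊆ F, ∃ U Z : Set X, IsOpen U ∧ IsMeagre Z ∧ ∀ x ∈ F, x ∉ Z → (x ∈ A ↔ x ∈ U)) :
    False := by
  classical
  have h1 : ∀ x : X, ∃ D : ℕ → Set X, (∀ n, IsOpen (D n)) ∧ (∀ n, Dense (D n)) ∧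
      (x ∈ F → ∀ y ∈ F, r y x → ∃ n, y ∉ D n) := by
    intro x
    by_cases hx : x ∈ F
    · obtain ⟨D, a, b, c⟩ := (hseg x hx).exists_seq_aux
      exact ⟨D, a, b, fun _ y hy hr => c y ⟨hy, hr⟩⟩
    · exact ⟨fun _ => univ, fun _ => isOpen_univ, fun _ => dense_univ, fun h => absurd h hx⟩
  choose D hDo hDd hD using h1
  have hB := isBasis_countableBasis X
  have : Countable (countableBasis X) := (countable_countableBasis X).to_subtype
  have h2 : ∀ (k : countableBasis X) (n : ℕ), ∃ U Z : Set X, IsOpen U ∧ IsMeagre Z ∧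
      ∀ x ∈ F, x ∉ Z → ((k : Set X) ⊆ D x n ↔ x ∈ U) := by
    intro k n
    obtain ⟨U, Z, hU, hZ, h⟩ := H {x | x ∈ F ∧ (k : Set X) ⊆ D x n} (fun x hx => hx.1)
    refine ⟨U, Z, hU, hZ, fun x hx hxZ => ?_⟩
    rw [← h x hx hxZ]
    simp [hx]
  choose U Z hU hZ hUZ using h2
  set Z' : Set X := ⋃ k, ⋃ n, Z k n with hZ'
  have hZm : IsMeagre Z' := isMeagre_iUnion fun k => isMeagre_iUnion fun n => hZ k n
  have hkey : ∀ x ∈ F, x ∉ Z' → ∀ (k : countableBasis X) (n : ℕ), ((k : Set X) ⊆ D x n ↔ x ∈ U k n) := by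
    intro x hx hxZ k n
    refine hUZ k n x hx fun h => hxZ ?_
    exact mem_iUnion.2 ⟨k, mem_iUnion.2 ⟨n, h⟩⟩
  -- the open set `O n` in the plane
  let O : ℕ → X → X → Prop := fun n x y => ∃ k : countableBasis X, x ∈ U k n ∧ y ∈ (k : Set X)
  have hO : ∀ x ∈ F, x ∉ Z' → ∀ n y, (O n x y ↔ y ∈ D x n) := by
    intro x hx hxZ n y
    constructor
    · rintro ⟨k, hk, hy⟩
      exact (hkey x hx hxZ k n).2 hk hy
    · intro hy
      obtain ⟨v, hv, hyv, hvD⟩ := hB.exists_subset_of_mem_open hy (hDo x n)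
      exact ⟨⟨v, hv⟩, (hkey x hx hxZ ⟨v, hv⟩ n).1 hvD, hyv⟩
  have hOx : ∀ n y, IsOpen {x | O n x y} := by
    intro n y
    have : {x | O n x y} = ⋃ k : countableBasis X, ⋃ _ : y ∈ (k : Set X), U k n := by
      ext x; simp [O, and_comm]
    rw [this]
    exact isOpen_iUnion fun k => isOpen_iUnion fun _ => hU k n
  have hOy : ∀ n (j : Set X), IsOpen {y | ∃ x ∈ j, O n x y} := by
    intro n j
    have : {y | ∃ x ∈ j, O n x y} =
        ⋃ k : countableBasis X, ⋃ _ : (∃ x ∈ j, x ∈ U k n), (k : Set X) := by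
      ext y
      simp only [O, mem_ofPred_eq, mem_iUnion, exists_prop]
      constructor
      · rintro ⟨x, hx, k, hk, hy⟩; exact ⟨k, ⟨x, hx, hk⟩, hy⟩
      · rintro ⟨k, ⟨x, hx, hk⟩, hy⟩; exact ⟨x, hx, k, hk, hy⟩
    rw [this]
    exact isOpen_iUnion fun k => isOpen_iUnion fun _ => hB.isOpen k.2
  set G : Set X := F \ Z' with hG
  set W : Set X := interior (closure G) with hW
  have hfr : IsMeagre (closure G \ W) := by
    have h := isMeagre_compl_aux (s := (closure G \ W)ᶜ) ?_ ?_
    · rwa [compl_compl] at h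
    · rw [isOpen_compl_iff]
      exact isClosed_closure.sdiff isOpen_interior
    · rw [← interior_eq_empty_iff_dense_compl]
      have := interior_frontier (s := closure G) isClosed_closure
      rwa [isClosed_closure.frontier_eq] at this
  -- exceptional set of `y`
  have hE : IsMeagre (⋃ n : ℕ, ⋃ j : countableBasis X,
      ⋃ _ : ((j : Set X) ∩ W).Nonempty, {y | ∃ x ∈ (j : Set X) ∩ W, O n x y}ᶜ) := by
    refine isMeagre_iUnion fun n => isMeagre_iUnion fun j => isMeagre_iUnion fun hj => ?_
    refine isMeagre_compl_aux (hOy n _) ?_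
    obtain ⟨w, hw⟩ := hj
    have hjo : IsOpen ((j : Set X) ∩ W) := (hB.isOpen j.2).inter isOpen_interior
    obtain ⟨x, hxj, hxG⟩ := mem_closure_iff.1 (interior_subset hw.2) _ hjo hw
    refine (hDd x n).mono fun y hy => ⟨x, hxj, (hO x hxG.1 hxG.2 n y).2 hy⟩
  have hy : ∃ y ∈ F, y ∉ (⋃ n : ℕ, ⋃ j : countableBasis X,
      ⋃ _ : ((j : Set X) ∩ W).Nonempty, {y | ∃ x ∈ (j : Set X) ∩ W, O n x y}ᶜ) := by
    by_contra! hc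
    exact hF (hE.mono hc)
  obtain ⟨y, hyF, hyE⟩ := hy
  have hydense : ∀ n (j : Set X), j ∈ countableBasis X → (j ∩ W).Nonempty →
      ∃ x ∈ j ∩ W, O n x y := by
    intro n j hj hne
    by_contra hc
    exact hyE (mem_iUnion.2 ⟨n, mem_iUnion.2 ⟨⟨j, hj⟩, mem_iUnion.2 ⟨hne, hc⟩⟩⟩)
  have hN : ∀ n, IsMeagre (W \ {x | O n x y}) := by
    intro n
    have hd : Dense ({x | O n x y} ∪ (closure W)ᶜ) := by
      rw [hB.dense_iff]
      intro j hj hne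
      by_cases hjW : (j ∩ W).Nonempty
      · obtain ⟨x, hx, hxO⟩ := hydense n j hj hjW
        exact ⟨x, hx.1, Or.inl hxO⟩
      · obtain ⟨x, hx⟩ := hne
        refine ⟨x, hx, Or.inr fun hc => hjW ?_⟩
        exact mem_closure_iff.1 hc j (hB.isOpen hj) hx
    refine (isMeagre_compl_aux ((hOx n y).union isClosed_closure.isOpen_compl) hd).mono ?_
    rintro x ⟨hxW, hx⟩ (h | h)
    · exact hx h
    · exact h (subset_closure hxW)
  have hall : IsMeagre (Z' ∪ (closure G \ W) ∪ (⋃ n, W \ {x | O n x y}) ∪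
      ({x | x ∈ F ∧ r x y} ∪ {y})) :=
    ((hZm.union hfr).union (isMeagre_iUnion hN)).union ((hseg y hyF).union (hsing y))
  refine hF (hall.mono fun x hx => ?_)
  by_cases hxZ : x ∈ Z'
  · exact Or.inl (Or.inl (Or.inl hxZ))
  by_cases hxW : x ∈ W
  · rcases htri x y with h | h | h
    · exact Or.inr (Or.inl ⟨hx, h⟩)
    · exact Or.inr (Or.inr h)
    · obtain ⟨n, hn⟩ := hD x hx y hyF h
      refine Or.inl (Or.inr (mem_iUnion.2 ⟨n, hxW, fun hc => hn ?_⟩))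
      exact (hO x hx hxZ n y).1 hc
  · exact Or.inl (Or.inl (Or.inr ⟨subset_closure ⟨hx, hxZ⟩, hxW⟩))

open Set Topology TopologicalSpace in
/-- Reduction to the case where initial segments are meagre. -/
lemma lusin_general {X : Type*} [TopologicalSpace X] [SecondCountableTopology X]
    (hsing : ∀ x : X, IsMeagre ({x} : Set X)) (F : Set X) (hF : ¬ IsMeagre F)
    (H : ∀ A ⊆ F, ∃ U Z : Set X, IsOpen U ∧ IsMeagre Z ∧ ∀ x ∈ F, x ∉ Z → (x ∈ A ↔ x ∈ U)) :
    False := by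
  let r : X → X → Prop := WellOrderingRel
  have hwf : WellFounded r := IsWellFounded.wf
  have htri : ∀ x y, r x y ∨ x = y ∨ r y x := fun x y => trichotomous_of r x y
  by_cases hall : ∀ x ∈ F, IsMeagre {y | y ∈ F ∧ r y x}
  · exact lusin_core r htri hsing F hF hall H
  push Not at hall
  obtain ⟨a, ha, hmin⟩ := hwf.has_min {x | x ∈ F ∧ ¬ IsMeagre {y | y ∈ F ∧ r y x}} hall
  refine lusin_core r htri hsing {y | y ∈ F ∧ r y a} ha.2 ?_ ?_
  · intro x hx
    have : IsMeagre {y | y ∈ F ∧ r y x} := by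
      by_contra hc
      exact hmin x ⟨hx.1, hc⟩ hx.2
    refine this.mono ?_
    rintro y ⟨hy, hyr⟩
    exact ⟨hy.1, hyr⟩
  · intro A hA
    obtain ⟨U, Z, hU, hZ, h⟩ := H A (fun x hx => (hA hx).1)
    exact ⟨U, Z, hU, hZ, fun x hx => h x hx.1⟩

/-- **Lusin–Novikov (Baire part).** If `F ⊆ ℝ` is not always of 1st category
(there is a perfect set `P` such that `F ∩ P` is non-meager in the subspace
topology of `P`), then `F` splits into two disjoint pieces which cannot be
separated by a Borel set. -/
theorem lusin_decomposition (F : Set ℝ)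
    (hF : ∃ P : Set ℝ, Perfect P ∧ ¬ IsMeagre (Subtype.val ⁻¹' F : Set P)) :
    ∃ F₁ F₂ : Set ℝ, F₁ ∪ F₂ = F ∧ Disjoint F₁ F₂ ∧
      ¬ ∃ B : Set ℝ, MeasurableSet B ∧ F₁ ⊆ B ∧ B ∩ F₂ = ∅ := by
  obtain ⟨P, hP, hF⟩ := hF
  by_contra! hcon
  refine lusin_general (X := P) ?_ _ hF ?_
  · intro x
    have hd : Dense ({x}ᶜ : Set P) := by
      rw [← interior_eq_empty_iff_dense_compl]
      by_contra hne
      obtain ⟨z, hz⟩ := Set.nonempty_iff_ne_empty.2 hne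
      have hzx : z = x := Set.mem_singleton_iff.1 (interior_subset hz)
      subst hzx
      have hn : ({z} : Set P) ∈ nhds z := mem_interior_iff_mem_nhds.1 hz
      obtain ⟨V, hV, hVz⟩ := mem_nhds_subtype _ _ _ |>.1 hn
      obtain ⟨w, ⟨hwV, hwP⟩, hwz⟩ := accPt_iff_nhds.1 (hP.acc z z.2) V hV
      have : (⟨w, hwP⟩ : P) = z := hVz hwV
      exact hwz (congrArg Subtype.val this)
    have := isMeagre_compl_aux isClosed_singleton.isOpen_compl hd
    rwa [compl_compl] at this
  · intro A hA
    have hAF : Subtype.val '' A ⊆ F := by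
      rintro _ ⟨x, hx, rfl⟩; exact hA hx
    obtain ⟨B, hB, hAB, hBF⟩ := hcon (Subtype.val '' A) (F \ Subtype.val '' A)
      (Set.union_sdiff_cancel hAF) Set.disjoint_sdiff_right
    have hBm : MeasurableSet (Subtype.val ⁻¹' B : Set P) := measurable_subtype_coe hB
    obtain ⟨U, hU, hUB⟩ := hBm.residualEq_isOpen
    refine ⟨U, {x | x ∈ (Subtype.val ⁻¹' B : Set P) ↔ x ∈ U}ᶜ, hU, ?_, ?_⟩
    · rw [IsMeagre, compl_compl]
      filter_upwards [hUB] with x hx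
      exact iff_of_eq hx
    · intro x hxF hx
      rw [Set.mem_compl_iff, not_not] at hx
      rw [← show _ ↔ _ from hx]
      constructor
      · intro h; exact hAB ⟨x, h, rfl⟩
      · intro h
        by_contra hxA
        have : (x : ℝ) ∈ B ∩ (F \ Subtype.val '' A) := by
          refine ⟨h, hxF, ?_⟩
          rintro ⟨z, hz, hzx⟩
          exact hxA (Subtype.ext hzx ▸ hz)
        rw [hBF] at this
        exact this
end

section
/- Let I be a nondegenerate closed interval of ℝ and let E ⊆ I be a set which is non-meager in ℝ. Then there exist a nondegenerate closed interval J ⊆ I and two disjoint subsets E₁ and E₂ of E such that for every point x ∈ J and every open set V containing x, both E₁ ∩ V and E₂ ∩ V are non-meager in ℝ. -/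
open Set TopologicalSpace

lemma meagre_seq {s : Set ℝ} (h : IsMeagre s) :
    ∃ F : ℕ → Set ℝ, (∀ n, IsNowhereDense (F n)) ∧ s ⊆ ⋃ n, F n := by
  obtain ⟨S, hS, hc, hs⟩ := isMeagre_iff_countable_union_isNowhereDense.1 h
  obtain ⟨F, hF⟩ := (hc.insert ∅).exists_eq_range ⟨∅, by simp⟩
  refine ⟨F, fun n => ?_, ?_⟩
  · have : F n ∈ insert ∅ S := hF ▸ mem_range_self n
    rcases this with h | h
    · rw [h]; exact isNowhereDense_empty
    · exact hS _ h
  · rw [← sUnion_range, ← hF]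
    exact hs.trans (sUnion_subset_sUnion (subset_insert _ _))

lemma meagre_of_dense_open {U : Set ℝ} (ho : IsOpen U) (hd : Dense U) : IsMeagre Uᶜ :=
  (isClosed_isNowhereDense_iff_compl.2 ⟨by simpa using ho, by simpa using hd⟩).2.isMeagre

/-- The largest open set on which `A` is meagre. -/
def nullPart (A : Set ℝ) : Set ℝ := ⋃₀ {V | IsOpen V ∧ IsMeagre (A ∩ V)}

lemma nullPart_open (A : Set ℝ) : IsOpen (nullPart A) := isOpen_sUnion fun _ h => h.1

lemma nullPart_meagre (A : Set ℝ) : IsMeagre (A ∩ nullPart A) := by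
  obtain ⟨T, hT, hTS, h⟩ := isOpen_sUnion_countable {V | IsOpen V ∧ IsMeagre (A ∩ V)}
    (fun _ h => h.1)
  rw [nullPart, ← h, sUnion_eq_biUnion, inter_iUnion₂]
  exact isMeagre_biUnion hT fun i hi => (hTS hi).2

lemma exists_good_subset {E : Set ℝ} (hE : ¬ IsMeagre E) :
    ∃ E' ⊆ E, ¬ IsMeagre E' ∧ ∃ r : ℝ → ℝ → Prop,
      (∀ x ∈ E', IsMeagre {y ∈ E' | r y x}) ∧
      (∀ x ∈ E', IsMeagre {y ∈ E' | ¬ r x y}) := by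
  obtain ⟨E', ⟨hE'E, hE'⟩, hmin⟩ := (InvImage.wf (fun s : Set ℝ => Cardinal.mk s)
    Cardinal.lt_wf).has_min {s | s ⊆ E ∧ ¬ IsMeagre s} ⟨E, Subset.rfl, hE⟩
  have hsmall : ∀ s ⊆ E', Cardinal.mk s < Cardinal.mk E' → IsMeagre s := by
    intro s hs hc
    by_contra h
    exact hmin s ⟨hs.trans hE'E, h⟩ hc
  obtain ⟨r, wo, hr⟩ := Cardinal.exists_ord_eq E'
  have h1 : ∀ x ∈ E', IsMeagre {y ∈ E' | ∃ (hy : y ∈ E') (hx : x ∈ E'), r ⟨y, hy⟩ ⟨x, hx⟩} := by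
    intro x hx
    apply hsmall _ (sep_subset _ _)
    have := Cardinal.card_typein_lt (r := r) ⟨x, hx⟩ hr
    refine lt_of_le_of_lt ?_ this
    rw [Ordinal.card_typein]
    refine Cardinal.mk_le_of_injective (f := fun y => ⟨⟨y.1, y.2.1⟩, ?_⟩) ?_
    · obtain ⟨_, _, _, h⟩ := y.2
      exact h
    · intro y z h
      simpa [Subtype.ext_iff] using h
  refine ⟨E', hE'E, hE', _, h1, fun x hx => ?_⟩
  have h2 : IsMeagre ({x} : Set ℝ) := by
    apply IsNowhereDense.isMeagre
    simp [IsNowhereDense]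
  refine ((h1 x hx).union h2).mono ?_
  rintro y ⟨hy, hn⟩
  rcases trichotomous_of r ⟨x, hx⟩ ⟨y, hy⟩ with h | h | h
  · exact absurd ⟨hx, hy, h⟩ hn
  · right; exact (congrArg Subtype.val h).symm
  · left; exact ⟨hy, hy, hx, h⟩

lemma core {E : Set ℝ} (hE : ¬ IsMeagre E)
    (H : ∀ A ⊆ E, ∀ U : Set ℝ, IsOpen U → U.Nonempty → ∃ V ⊆ U, IsOpen V ∧ V.Nonempty ∧
      (IsMeagre (A ∩ V) ∨ IsMeagre ((E \ A) ∩ V)))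
    (r : ℝ → ℝ → Prop)
    (h1 : ∀ x ∈ E, IsMeagre {y ∈ E | r y x})
    (h2 : ∀ x ∈ E, IsMeagre {y ∈ E | ¬ r x y}) : False := by
  -- relative Baire property
  have hB : ∀ A ⊆ E, IsMeagre {y ∈ E | ¬ (y ∈ A ↔ y ∈ nullPart (E \ A))} := by
    intro A hA
    have hd : Dense (nullPart A ∪ nullPart (E \ A)) := by
      rw [dense_iff_inter_open]
      intro U hU hUn
      obtain ⟨V, hVU, hV, ⟨v, hv⟩, h⟩ := H A hA U hU hUn
      refine ⟨v, hVU hv, ?_⟩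
      rcases h with h | h
      · exact Or.inl ⟨V, ⟨hV, h⟩, hv⟩
      · exact Or.inr ⟨V, ⟨hV, h⟩, hv⟩
    refine (((nullPart_meagre A).union (nullPart_meagre (E \ A))).union
      (meagre_of_dense_open ((nullPart_open _).union (nullPart_open _)) hd)).mono ?_
    rintro y ⟨hy, hn⟩
    simp only [mem_union, mem_inter_iff, mem_sdiff, mem_compl_iff]
    tauto
  -- the cover
  have hF : ∀ y, ∃ F : ℕ → Set ℝ, (∀ n, IsNowhereDense (F n)) ∧
      (y ∈ E → {x ∈ E | r x y} ⊆ ⋃ n, F n) := by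
    intro y
    by_cases hy : y ∈ E
    · obtain ⟨F, hF, h⟩ := meagre_seq (h1 y hy)
      exact ⟨F, hF, fun _ => h⟩
    · exact ⟨fun _ => ∅, fun _ => isNowhereDense_empty, fun h => absurd h hy⟩
  choose F hFn hFc using hF
  have hbas := isBasis_countableBasis ℝ
  let A : ℕ → countableBasis ℝ → Set ℝ := fun n k => {y ∈ E | Disjoint (k : Set ℝ) (F y n)}
  let O : ℕ → countableBasis ℝ → Set ℝ := fun n k => nullPart (E \ A n k)
  have hAE : ∀ n k, A n k ⊆ E := fun n k => sep_subset _ _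
  let M : Set ℝ := ⋃ n, ⋃ k, {y ∈ E | ¬ (y ∈ A n k ↔ y ∈ O n k)}
  have hM : IsMeagre M := isMeagre_iUnion fun n => isMeagre_iUnion fun k => hB _ (hAE n k)
  have hMO : ∀ y ∈ E, y ∉ M → ∀ n k, (y ∈ A n k ↔ y ∈ O n k) := by
    intro y hy hyM n k
    by_contra h
    exact hyM (mem_iUnion₂.2 ⟨n, k, hy, h⟩)
  -- for open V with E ∩ V non-meagre
  let P : countableBasis ℝ → Prop := fun m => ¬ IsMeagre (E ∩ m)
  let D : ℕ → countableBasis ℝ → Set ℝ := fun n m =>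
    {x | P m → ∃ k : countableBasis ℝ, x ∈ (k : Set ℝ) ∧ (O n k ∩ m).Nonempty}
  have hD : ∀ n m, IsMeagre (D n m)ᶜ := by
    intro n m
    by_cases hm : P m
    swap
    · have : D n m = univ := by ext x; simp [D, hm]
      rw [this, compl_univ]; exact IsMeagre.empty
    apply meagre_of_dense_open
    · have : D n m = ⋃ k ∈ {k : countableBasis ℝ | (O n k ∩ m).Nonempty}, (k : Set ℝ) := by
        ext x
        simp only [D, hm, true_imp_iff, mem_ofPred_eq, mem_iUnion, exists_prop]
        exact exists_congr fun k => and_comm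
      rw [this]
      exact isOpen_biUnion fun k _ => hbas.isOpen k.2
    · rw [dense_iff_inter_open]
      intro U hU hUn
      obtain ⟨y, ⟨hyE, hym⟩, hyM⟩ : ((E ∩ m) \ M).Nonempty := by
        rw [sdiff_nonempty]
        intro h
        exact hm (hM.mono h)
      have hne : (U ∩ (closure (F y n))ᶜ).Nonempty := by
        have := interior_eq_empty_iff_dense_compl.1 (hFn y n)
        exact this.inter_open_nonempty U hU hUn
      obtain ⟨k, hk, ⟨x, hx⟩, hkU⟩ := hbas.exists_nonempty_subset hne
        (hU.inter isClosed_closure.isOpen_compl)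
      refine ⟨x, (hkU hx).1, fun _ => ⟨⟨k, hk⟩, hx, y, ?_, hym⟩⟩
      rw [← hMO y hyE hyM]
      refine ⟨hyE, ?_⟩
      rw [disjoint_left]
      intro z hz hzF
      exact (hkU hz).2 (subset_closure hzF)
  obtain ⟨x, hxE, hxD⟩ : (E \ ⋃ n, ⋃ m, (D n m)ᶜ).Nonempty := by
    rw [sdiff_nonempty]
    intro h
    exact hE ((isMeagre_iUnion fun n => isMeagre_iUnion fun m => hD n m).mono h)
  simp only [mem_iUnion, mem_compl_iff, not_exists, not_not] at hxD
  let W : ℕ → Set ℝ := fun n => nullPart E ∪ ⋃ k ∈ {k : countableBasis ℝ | x ∈ (k : Set ℝ)}, O n k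
  have hW : ∀ n, IsMeagre (W n)ᶜ := by
    intro n
    apply meagre_of_dense_open
    · exact (nullPart_open _).union (isOpen_biUnion fun k _ => nullPart_open _)
    · rw [hbas.dense_iff]
      intro m hm hmn
      by_cases hP : P ⟨m, hm⟩
      · obtain ⟨k, hxk, y, hyO, hym⟩ := hxD n ⟨m, hm⟩ hP
        exact ⟨y, hym, Or.inr (mem_iUnion₂.2 ⟨k, hxk, hyO⟩)⟩
      · obtain ⟨y, hy⟩ := hmn
        exact ⟨y, hy, Or.inl ⟨m, ⟨hbas.isOpen hm, not_not.1 hP⟩, hy⟩⟩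
  obtain ⟨y, hyE, hy⟩ : (E \ (((⋃ n, (W n)ᶜ) ∪ M) ∪ ({y ∈ E | ¬ r x y} ∪
      (E ∩ nullPart E)))).Nonempty := by
    rw [sdiff_nonempty]
    intro h
    exact hE ((((isMeagre_iUnion hW).union hM).union
      ((h2 x hxE).union (nullPart_meagre E))).mono h)
  simp only [mem_union, not_or, mem_iUnion, mem_compl_iff, not_exists, not_not] at hy
  obtain ⟨⟨hyW, hyM⟩, hyr, hyN⟩ := hy
  have hxy : r x y := by
    by_contra h
    exact hyr ⟨hyE, h⟩
  obtain ⟨n, hn⟩ := mem_iUnion.1 (hFc y hyE ⟨hxE, hxy⟩)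
  rcases hyW n with h | h
  · exact hyN ⟨hyE, h⟩
  · obtain ⟨k, hk, hyO⟩ := mem_iUnion₂.1 h
    have := (hMO y hyE hyM n k).2 hyO
    exact disjoint_left.1 this.2 hk hn

theorem sierpinski_lemma (a b : ℝ) (hab : a < b) (E : Set ℝ)
    (hEI : E ⊆ Set.Icc a b) (hE : ¬ IsMeagre E) :
    ∃ c d : ℝ, c < d ∧ Set.Icc c d ⊆ Set.Icc a b ∧
      ∃ E₁ E₂ : Set ℝ, E₁ ⊆ E ∧ E₂ ⊆ E ∧ Disjoint E₁ E₂ ∧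
        ∀ x ∈ Set.Icc c d, ∀ V : Set ℝ, IsOpen V → x ∈ V →
          ¬ IsMeagre (E₁ ∩ V) ∧ ¬ IsMeagre (E₂ ∩ V) := by
  by_contra hcon
  obtain ⟨E', hE'E, hE', r, h1, h2⟩ := exists_good_subset hE
  refine core hE' ?_ r h1 h2
  intro A hA U hU hUn
  by_cases hne : (U ∩ Ioo a b).Nonempty
  · obtain ⟨z, hz⟩ := hne
    obtain ⟨ε, hε, hball⟩ := Metric.isOpen_iff.1 (hU.inter isOpen_Ioo) z hz
    rw [Real.ball_eq_Ioo] at hball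
    have hsub : Icc (z - ε / 2) (z + ε / 2) ⊆ U ∩ Ioo a b := fun t ht =>
      hball ⟨by linarith [ht.1], by linarith [ht.2]⟩
    by_contra hno
    push Not at hno
    refine hcon ⟨z - ε / 2, z + ε / 2, by linarith,
      fun t ht => Ioo_subset_Icc_self (hsub ht).2, A, E' \ A, hA.trans hE'E,
      sdiff_subset.trans hE'E, disjoint_sdiff_right, ?_⟩
    intro x hx V hV hxV
    have := hno (V ∩ (U ∩ Ioo a b)) (fun t ht => ht.2.1) (hV.inter (hU.inter isOpen_Ioo))
      ⟨x, hxV, hsub hx⟩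
    exact ⟨fun h => this.1 (h.mono (inter_subset_inter_right _ inter_subset_left)),
      fun h => this.2 (h.mono (inter_subset_inter_right _ inter_subset_left))⟩
  · refine ⟨U \ {a, b}, sdiff_subset, hU.sdiff (Set.toFinite _).isClosed, ?_, Or.inl ?_⟩
    · have : Dense (({a, b} : Set ℝ)ᶜ) := (Set.to_countable ({a, b} : Set ℝ)).dense_compl ℝ
      exact this.inter_open_nonempty U hU hUn
    · convert IsMeagre.empty
      rw [eq_empty_iff_forall_notMem]
      rintro t ⟨htA, htU, htab⟩
      have ht := hEI (hE'E (hA htA))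
      simp only [mem_insert_iff, mem_singleton_iff, not_or] at htab
      exact hne ⟨t, htU, lt_of_le_of_ne ht.1 (Ne.symm htab.1), lt_of_le_of_ne ht.2 htab.2⟩
end

section
/- Let Y be a second countable T1 topological space without isolated points and let E ⊆ Y be a non-meager set. Then E can be written as the union of two disjoint subsets E₁ and E₂ such that there is no set G ⊆ Y having the Baire property with E₁ ⊆ G and G ∩ E₂ = ∅. -/
/-- A set has the Baire property if its symmetric difference with some open set
is meager. -/
def HasBaireProperty {Y : Type*} [TopologicalSpace Y] (s : Set Y) : Prop :=
  ∃ U : Set Y, IsOpen U ∧ IsMeagre (symmDiff s U)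


theorem meagre_dense_seq {Y : Type*} [TopologicalSpace Y] {s : Set Y} (h : IsMeagre s) :
    ∃ O : ℕ → Set Y, (∀ n, IsOpen (O n)) ∧ (∀ n, Dense (O n)) ∧ ∀ x ∈ s, ∃ n, x ∉ O n := by
  rw [IsMeagre, mem_residual_iff] at h
  obtain ⟨S, hSo, hSd, hSc, hS⟩ := h
  obtain ⟨f, hf⟩ := (hSc.insert Set.univ).exists_eq_range (Set.insert_nonempty _ _)
  have hm : ∀ n, f n = Set.univ ∨ f n ∈ S := by
    intro n
    have : f n ∈ insert Set.univ S := by rw [hf]; exact ⟨n, rfl⟩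
    simpa using this
  refine ⟨f, fun n => ?_, fun n => ?_, fun x hx => ?_⟩
  · rcases hm n with h | h
    · rw [h]; exact isOpen_univ
    · exact hSo _ h
  · rcases hm n with h | h
    · rw [h]; exact dense_univ
    · exact hSd _ h
  · by_contra! hc
    refine hS (fun t ht => ?_) hx
    have : t ∈ Set.range f := by rw [← hf]; exact Or.inr ht
    obtain ⟨n, rfl⟩ := this
    exact hc n

open TopologicalSpace in
theorem meagre_diff_open {Y : Type*} [TopologicalSpace Y] [SecondCountableTopology Y]
    (E T : Set Y) (hT : IsOpen T)
    (h : ∀ V ∈ countableBasis Y, ¬ IsMeagre (E ∩ V) → (T ∩ V).Nonempty) :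
    IsMeagre (E \ T) := by
  have h1 : IsMeagre (frontier T) := by
    rw [IsMeagre]
    refine residual_of_dense_open isClosed_frontier.isOpen_compl ?_
    rw [← interior_eq_empty_iff_dense_compl]
    rw [← frontier_compl]
    exact interior_frontier hT.isClosed_compl
  have h2 : IsMeagre (⋃ V : {V : countableBasis Y // T ∩ V.1 = ∅}, E ∩ V.1.1) := by
    have : Countable (countableBasis Y) := (countable_countableBasis Y).to_subtype
    refine isMeagre_iUnion (fun V => ?_)
    by_contra hc
    have := h _ V.1.2 hc
    rw [V.2] at this
    simp at this
  refine (h1.union h2).mono ?_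
  rintro x ⟨hxE, hxT⟩
  by_cases hx : x ∈ closure T
  · left
    rw [hT.frontier_eq]; exact ⟨hx, hxT⟩
  · right
    obtain ⟨V, hV, hxV, hVs⟩ := (isBasis_countableBasis Y).exists_subset_of_mem_open
      (show x ∈ (closure T)ᶜ from hx) isClosed_closure.isOpen_compl
    refine Set.mem_iUnion.2 ⟨⟨⟨V, hV⟩, ?_⟩, hxE, hxV⟩
    ext z
    simp only [Set.mem_inter_iff, Set.mem_empty_iff_false, iff_false, not_and]
    intro hz hzV
    exact hVs hzV (subset_closure hz)

open TopologicalSpace in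
theorem core_false {Y : Type*} [TopologicalSpace Y] [SecondCountableTopology Y]
    (r : Y → Y → Prop) (tot : ∀ x y, r x y ∨ r y x)
    (E : Set Y) (hE : ¬ IsMeagre E)
    (hr : ∀ y ∈ E, IsMeagre {x | x ∈ E ∧ r x y})
    (H : ∀ A ⊆ E, ∃ U, IsOpen U ∧ IsMeagre (E ∩ symmDiff A U)) : False := by
  have : Countable (countableBasis Y) := (countable_countableBasis Y).to_subtype
  have hr' : ∀ y, ∃ O : ℕ → Set Y, y ∈ E → (∀ n, IsOpen (O n)) ∧ (∀ n, Dense (O n)) ∧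
      ∀ x ∈ E, r x y → ∃ n, x ∉ O n := by
    intro y
    by_cases hy : y ∈ E
    · obtain ⟨O, h1, h2, h3⟩ := meagre_dense_seq (hr y hy)
      exact ⟨O, fun _ => ⟨h1, h2, fun x hx hxy => h3 x ⟨hx, hxy⟩⟩⟩
    · exact ⟨fun _ => ∅, fun h => absurd h hy⟩
  choose O hO using hr'
  have hA : ∀ (n : ℕ) (B : countableBasis Y), ∃ U, IsOpen U ∧
      IsMeagre (E ∩ symmDiff {y | y ∈ E ∧ B.1 ⊆ O y n} U) :=
    fun n B => H _ (fun y hy => hy.1)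
  choose U hUo hUm using hA
  set M : Set Y := ⋃ n, ⋃ B, (E ∩ symmDiff {y | y ∈ E ∧ B.1 ⊆ O y n} (U n B)) with hM
  have hMm : IsMeagre M := isMeagre_iUnion (fun n => isMeagre_iUnion (fun B => hUm n B))
  have key : ∀ y ∈ E, y ∉ M → ∀ n B, (B.1 ⊆ O y n ↔ y ∈ U n B) := by
    intro y hy hyM n B
    have : y ∉ E ∩ symmDiff {y | y ∈ E ∧ B.1 ⊆ O y n} (U n B) := fun h =>
      hyM (Set.mem_iUnion.2 ⟨n, Set.mem_iUnion.2 ⟨B, h⟩⟩)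
    simp only [Set.mem_inter_iff, Set.mem_symmDiff, Set.mem_ofPred_eq] at this
    tauto
  -- section of `W n` at `x`
  let T : ℕ → Y → Set Y := fun n x => ⋃ B : {B : countableBasis Y // x ∈ B.1}, U n B.1
  have hTo : ∀ n x, IsOpen (T n x) := fun n x => isOpen_iUnion (fun B => hUo n B.1)
  have keyT : ∀ y ∈ E, y ∉ M → ∀ n x, (x ∈ O y n ↔ y ∈ T n x) := by
    intro y hy hyM n x
    constructor
    · intro hx
      obtain ⟨B, hB, hxB, hBs⟩ := (isBasis_countableBasis Y).exists_subset_of_mem_open hx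
        ((hO y hy).1 n)
      exact Set.mem_iUnion.2 ⟨⟨⟨B, hB⟩, hxB⟩, (key y hy hyM n ⟨B, hB⟩).1 hBs⟩
    · intro hx
      obtain ⟨B, hB⟩ := Set.mem_iUnion.1 hx
      exact (key y hy hyM n B.1).2 hB B.2
  have hbad : IsMeagre (⋃ n, ⋃ V : {V : countableBasis Y // ¬ IsMeagre (E ∩ V.1)},
      {x | (T n x ∩ V.1.1).Nonempty}ᶜ) := by
    refine isMeagre_iUnion (fun n => isMeagre_iUnion (fun V => ?_))
    have ho : IsOpen {x | (T n x ∩ V.1.1).Nonempty} := by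
      rw [isOpen_iff_forall_mem_open]
      rintro x ⟨y, hy, hyV⟩
      obtain ⟨B, hB⟩ := Set.mem_iUnion.1 hy
      refine ⟨B.1.1, fun z hz => ⟨y, Set.mem_iUnion.2 ⟨⟨B.1, hz⟩, hB⟩, hyV⟩,
        (isBasis_countableBasis Y).isOpen B.1.2, B.2⟩
    have hd : Dense {x | (T n x ∩ V.1.1).Nonempty} := by
      have : ¬ ((E ∩ V.1.1) ⊆ M) := fun h => V.2 (hMm.mono h)
      obtain ⟨y, ⟨hyE, hyV⟩, hyM⟩ := Set.not_subset.1 this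
      refine ((hO y hyE).2.1 n).mono (fun x hx => ?_)
      exact ⟨y, (keyT y hyE hyM n x).1 hx, hyV⟩
    rw [IsMeagre, compl_compl]
    exact residual_of_dense_open ho hd
  obtain ⟨x, hxE, hx⟩ := Set.not_subset.1 (fun h => hE (hbad.mono h))
  have hx' : ∀ n, ∀ V ∈ countableBasis Y, ¬ IsMeagre (E ∩ V) → (T n x ∩ V).Nonempty := by
    intro n V hV hm
    by_contra hc
    exact hx (Set.mem_iUnion.2 ⟨n, Set.mem_iUnion.2 ⟨⟨⟨V, hV⟩, hm⟩, hc⟩⟩)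
  have hm1 : IsMeagre (⋃ n, E \ T n x) :=
    isMeagre_iUnion (fun n => meagre_diff_open E _ (hTo n x) (hx' n))
  refine hE (((hm1.union hMm).union (hr x hxE)).mono (fun y hy => ?_))
  by_cases hyM : y ∈ M
  · exact Or.inl (Or.inr hyM)
  rcases tot x y with h | h
  · obtain ⟨n, hn⟩ := (hO y hy).2.2 x hxE h
    exact Or.inl (Or.inl (Set.mem_iUnion.2 ⟨n, hy, fun hT => hn ((keyT y hy hyM n x).2 hT)⟩))
  · exact Or.inr ⟨hy, h⟩

theorem exists_reduced {Y : Type*} [TopologicalSpace Y] [T1Space Y]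
    (hni : ∀ y : Y, ¬ IsOpen ({y} : Set Y)) (E : Set Y) (hE : ¬ IsMeagre E) :
    ∃ (r : Y → Y → Prop) (E' : Set Y), (∀ x y, r x y ∨ r y x) ∧ E' ⊆ E ∧ ¬ IsMeagre E' ∧
      ∀ y ∈ E', IsMeagre {x | x ∈ E' ∧ r x y} := by
  obtain ⟨lo, wf⟩ := exists_wellFoundedLT Y
  have hs : ∀ y : Y, IsMeagre ({y} : Set Y) := by
    intro y
    rw [IsMeagre]
    refine residual_of_dense_open isClosed_singleton.isOpen_compl ?_
    rw [← interior_eq_empty_iff_dense_compl]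
    by_contra hc
    have h1 := (Set.nonempty_iff_ne_empty.2 hc)
    have h2 : interior ({y} : Set Y) = {y} :=
      (Set.Nonempty.subset_singleton_iff h1).1 interior_subset
    exact hni y (h2 ▸ isOpen_interior)
  by_cases h : ∃ y, ¬ IsMeagre {x | x ∈ E ∧ x ≤ y}
  · obtain ⟨a, ha, hmin⟩ := (wellFounded_lt (α := Y)).has_min
      {y | ¬ IsMeagre {x | x ∈ E ∧ x ≤ y}} h
    refine ⟨(· ≤ ·), {x | x ∈ E ∧ x < a}, le_total, fun x hx => hx.1, fun hm => ?_, ?_⟩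
    · refine ha ((hm.union (hs a)).mono ?_)
      rintro x ⟨hx, hxa⟩
      rcases hxa.lt_or_eq with h | h
      · exact Or.inl ⟨hx, h⟩
      · exact Or.inr h
    · rintro y ⟨hy, hya⟩
      have : IsMeagre {x | x ∈ E ∧ x ≤ y} := by
        by_contra hc
        exact hmin y hc hya
      refine this.mono ?_
      rintro x ⟨⟨h1, _⟩, h2⟩
      exact ⟨h1, h2⟩
  · push Not at h
    exact ⟨(· ≤ ·), E, le_total, subset_rfl, hE, fun y _ => h y⟩

/-- **Corollary.** In a second countable T1 space without isolated points, every
non-meager set splits into two disjoint pieces which cannot be separated by a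
set having the Baire property. -/
theorem nonmeager_not_baire_separated {Y : Type*} [TopologicalSpace Y]
    [SecondCountableTopology Y] [T1Space Y]
    (hni : ∀ y : Y, ¬ IsOpen ({y} : Set Y)) (E : Set Y) (hE : ¬ IsMeagre E) :
    ∃ E₁ E₂ : Set Y, E₁ ∪ E₂ = E ∧ Disjoint E₁ E₂ ∧
      ¬ ∃ G : Set Y, HasBaireProperty G ∧ E₁ ⊆ G ∧ G ∩ E₂ = ∅ := by
  by_contra hcon
  obtain ⟨r, E', tot, hsub, hE', hr⟩ := exists_reduced hni E hE
  refine core_false r tot E' hE' hr (fun A hA => ?_)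
  by_contra hU
  refine hcon ⟨A, E \ A, Set.union_sdiff_cancel (hA.trans hsub), Set.disjoint_sdiff_right, ?_⟩
  rintro ⟨G, ⟨U, hUo, hUm⟩, hAG, hGE⟩
  refine hU ⟨U, hUo, hUm.mono ?_⟩
  rintro x ⟨hxE, hx⟩
  have h1 : x ∈ G → x ∈ A := fun hG => by
    by_contra hxA
    have : x ∈ G ∩ (E \ A) := ⟨hG, hsub hxE, hxA⟩
    rw [hGE] at this
    exact this
  have h2 := @hAG x
  simp only [Set.mem_symmDiff] at hx ⊢
  tauto
end

section
/- Let Y be a Polish space without isolated points and let E ⊆ Y be a set which is not always of 1st category (i.e., there exists a perfect set P ⊆ Y such that E ∩ P is non-meager in the subspace topology of P). Then E can be written as the union of two disjoint subsets E₁ and E₂ such that there is no set C ⊆ Y having the Baire property in the restricted sense with E₁ ⊆ C and C ∩ E₂ = ∅. -/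
open Set in
/-- A nonmeagre set in a second countable space with meagre points has a subset which is not
the trace of a set with the Baire property. -/
theorem exists_bad_subset {X : Type*} [TopologicalSpace X] [SecondCountableTopology X]
    (hs : ∀ x : X, IsMeagre ({x} : Set X)) (A₀ : Set X) (hA₀ : ¬ IsMeagre A₀) :
    ∃ B ⊆ A₀, ∀ U C : Set X, IsOpen U → IsMeagre (symmDiff C U) → B ⊆ C →
      ∃ x ∈ C, x ∈ A₀ \ B := by
  classical
  by_contra hcon
  push Not at hcon
  obtain ⟨_, _⟩ := exists_wellOrder X
  -- pass to a minimal nonmeagre initial segment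
  obtain ⟨A, hAA, hA, hini⟩ : ∃ A ⊆ A₀, ¬ IsMeagre A ∧ ∀ x ∈ A, IsMeagre (A ∩ Iio x) := by
    by_cases h : ∃ x, ¬ IsMeagre (A₀ ∩ Iio x)
    · let x := WellFounded.min (wellFounded_lt (α := X)) {x | ¬ IsMeagre (A₀ ∩ Iio x)} h
      have hx : ¬ IsMeagre (A₀ ∩ Iio x) :=
        WellFounded.min_mem (wellFounded_lt (α := X)) {x | ¬ IsMeagre (A₀ ∩ Iio x)} h
      refine ⟨A₀ ∩ Iio x, inter_subset_left, hx, fun y hy => ?_⟩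
      by_contra hy'
      refine WellFounded.not_lt_min (wellFounded_lt (α := X))
        {x | ¬ IsMeagre (A₀ ∩ Iio x)} (x := y) ?_ hy.2
      intro h3
      exact hy' (h3.mono (by intro z hz; exact ⟨hz.1.1, hz.2⟩))
    · push Not at h
      exact ⟨A₀, Subset.rfl, hA₀, fun x _ => h x⟩
  have htr : ∀ B ⊆ A, ∃ U : Set X, IsOpen U ∧ IsMeagre (A ∩ symmDiff B U) := by
    intro B hB
    obtain ⟨U, C, hU, hC, hBC, hd⟩ := hcon B (hB.trans hAA)
    refine ⟨U, hU, hC.mono ?_⟩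
    rintro x ⟨hxA, hx⟩
    rw [mem_symmDiff] at hx ⊢
    rcases hx with hx | hx
    · exact Or.inl ⟨hBC hx.1, hx.2⟩
    · exact Or.inr ⟨hx.1, fun hxC => hd x hxC ⟨hAA hxA, hx.2⟩⟩
  have hle : ∀ x ∈ A, ∃ F : ℕ → Set X, (∀ n, IsNowhereDense (F n)) ∧ (∀ n, IsClosed (F n)) ∧
      A ∩ Iic x ⊆ ⋃ n, F n := by
    intro x hx
    have hm : IsMeagre (A ∩ Iic x) := by
      refine ((hini x hx).union (hs x)).mono ?_
      rintro y ⟨hy, hyx⟩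
      rcases lt_or_eq_of_le hyx with h | h
      · exact Or.inl ⟨hy, h⟩
      · exact Or.inr h
    obtain ⟨S, hS, hSc, hsub⟩ := isMeagre_iff_countable_union_isNowhereDense.1 hm
    have hne : S.Nonempty := by
      by_contra h
      rw [not_nonempty_iff_eq_empty] at h
      subst h
      have := hsub (show x ∈ A ∩ Iic x from ⟨hx, le_rfl⟩)
      simp at this
    obtain ⟨f, rfl⟩ := hSc.exists_eq_range hne
    refine ⟨fun n => closure (f n), fun n => (hS _ (mem_range_self n)).closure,
      fun n => isClosed_closure, fun y hy => ?_⟩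
    obtain ⟨t, ⟨n, rfl⟩, hyt⟩ := hsub hy
    exact mem_iUnion.2 ⟨n, subset_closure hyt⟩
  choose! F hFn hFc hF using hle
  let M : X → ℕ → Set X := fun y n => {x | x ∈ A ∧ y ∈ F x n}
  have hpair : ∀ y ∈ A, ∃ p : TopologicalSpace.countableBasis X × ℕ,
      ¬ IsMeagre (A ∩ (p.1 : Set X)) ∧ IsMeagre ((A ∩ (p.1 : Set X)) \ M y p.2) := by
    intro y hy
    have h1 : ∃ n, ¬ IsMeagre (M y n) := by
      by_contra h
      push Not at h
      refine hA (((hini y hy).union (isMeagre_iUnion h)).mono ?_)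
      intro x hx
      rcases lt_or_ge x y with hxy | hxy
      · exact Or.inl ⟨hx, hxy⟩
      · right
        obtain ⟨n, hn⟩ := mem_iUnion.1 (hF x hx ⟨hy, hxy⟩)
        exact mem_iUnion.2 ⟨n, hx, hn⟩
    obtain ⟨n, hn⟩ := h1
    obtain ⟨U, hU, hUm⟩ := htr (M y n) (fun x hx => hx.1)
    have h2 : ∃ V : TopologicalSpace.countableBasis X, (V : Set X) ⊆ U ∧
        ¬ IsMeagre (A ∩ (V : Set X)) := by
      by_contra h
      push Not at h
      have : Countable (TopologicalSpace.countableBasis X) :=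
        (TopologicalSpace.countable_countableBasis X).to_subtype
      refine hn ((hUm.union (isMeagre_iUnion
        (f := fun V : {V : TopologicalSpace.countableBasis X // (V : Set X) ⊆ U} =>
          A ∩ ((V : TopologicalSpace.countableBasis X) : Set X))
        (fun V => h V.1 V.2))).mono ?_)
      intro x hx
      by_cases hxU : x ∈ U
      · right
        obtain ⟨V, hV, hxV, hVU⟩ :=
          (TopologicalSpace.isBasis_countableBasis X).exists_subset_of_mem_open hxU hU
        exact mem_iUnion.2 ⟨⟨⟨V, hV⟩, hVU⟩, hx.1, hxV⟩
      · exact Or.inl ⟨hx.1, mem_symmDiff.2 (Or.inl ⟨hx, hxU⟩)⟩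
    obtain ⟨V, hVU, hV⟩ := h2
    refine ⟨(V, n), hV, hUm.mono ?_⟩
    rintro x ⟨⟨hxA, hxV⟩, hx⟩
    exact ⟨hxA, mem_symmDiff.2 (Or.inr ⟨hVU hxV, hx⟩)⟩
  have : Countable (TopologicalSpace.countableBasis X) :=
    (TopologicalSpace.countable_countableBasis X).to_subtype
  have hB : ∃ p : TopologicalSpace.countableBasis X × ℕ,
      ¬ IsMeagre {y | y ∈ A ∧ ¬ IsMeagre (A ∩ (p.1 : Set X)) ∧
        IsMeagre ((A ∩ (p.1 : Set X)) \ M y p.2)} := by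
    by_contra h
    push Not at h
    refine hA ((isMeagre_iUnion h).mono ?_)
    intro y hy
    obtain ⟨p, hp⟩ := hpair y hy
    exact mem_iUnion.2 ⟨p, hy, hp⟩
  obtain ⟨⟨V, n⟩, hB⟩ := hB
  set B := {y | y ∈ A ∧ ¬ IsMeagre (A ∩ (V : Set X)) ∧ IsMeagre ((A ∩ (V : Set X)) \ M y n)}
    with hBdef
  have hV : ¬ IsMeagre (A ∩ (V : Set X)) := by
    intro h
    refine hB (IsMeagre.empty.mono ?_)
    intro y hy
    exact (hy.2.1 h).elim
  obtain ⟨D, hDc, hDd⟩ := TopologicalSpace.exists_countable_dense B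
  have : Countable D := hDc.to_subtype
  have hx : ∃ x ∈ A, ∀ y ∈ D, (y : X) ∈ F x n := by
    by_contra h
    push Not at h
    refine hV ((isMeagre_iUnion (f := fun y : D => (A ∩ (V : Set X)) \ M y n)
      (fun y => y.1.2.2.2)).mono ?_)
    intro x hx
    obtain ⟨y, hy, hyx⟩ := h x hx.1
    exact mem_iUnion.2 ⟨⟨y, hy⟩, hx, fun hh => hyx hh.2⟩
  obtain ⟨x, hxA, hx⟩ := hx
  have hBF : B ⊆ F x n := by
    intro y hy
    have h1 : IsClosed ((↑) ⁻¹' F x n : Set B) := (hFc x hxA n).preimage continuous_subtype_val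
    have h2 : closure D ⊆ ((↑) ⁻¹' F x n : Set B) := closure_minimal hx h1
    exact h2 (hDd ⟨y, hy⟩)
  exact hB ((hFn x hxA n).isMeagre.mono hBF)


/-- A set has the Baire property in the restricted sense if its trace on every
subspace `S` has the Baire property relative to the subspace topology of `S`. -/
def HasBairePropertyRestricted {Y : Type*} [TopologicalSpace Y] (C : Set Y) : Prop :=
  ∀ S : Set Y, ∃ U : Set S, IsOpen U ∧
    IsMeagre (symmDiff (Subtype.val ⁻¹' C : Set S) U)

/-- **Corollary 3.4.** In a Polish space without isolated points, every set that
is not always of 1st category splits into two disjoint pieces which cannot be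
separated by a set having the Baire property in the restricted sense. -/
theorem not_alwaysFirstCategory_not_separated {Y : Type*} [TopologicalSpace Y]
    [PolishSpace Y] (hni : ∀ y : Y, ¬ IsOpen ({y} : Set Y)) (E : Set Y)
    (hE : ∃ P : Set Y, Perfect P ∧ ¬ IsMeagre (Subtype.val ⁻¹' E : Set P)) :
    ∃ E₁ E₂ : Set Y, E₁ ∪ E₂ = E ∧ Disjoint E₁ E₂ ∧
      ¬ ∃ C : Set Y, HasBairePropertyRestricted C ∧ E₁ ⊆ C ∧ C ∩ E₂ = ∅ := by
  obtain ⟨P, hP, hEP⟩ := hE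
  have hs : ∀ x : P, IsMeagre ({x} : Set P) := by
    intro x
    refine IsNowhereDense.isMeagre ?_
    rw [isClosed_singleton.isNowhereDense_iff, Set.eq_empty_iff_forall_notMem]
    intro z hz
    have hzx : z = x := Set.mem_singleton_iff.1 (interior_subset hz)
    subst hzx
    have hz' : ({z} : Set P) ∈ nhds z := mem_interior_iff_mem_nhds.1 hz
    rw [mem_nhds_subtype] at hz'
    obtain ⟨u, hu, hsub⟩ := hz'
    have hacc := hP.acc z z.2
    rw [accPt_iff_nhds] at hacc
    obtain ⟨y, hy, hyz⟩ := hacc u hu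
    have := hsub (show (⟨y, hy.2⟩ : P) ∈ Subtype.val ⁻¹' u from hy.1)
    exact hyz (congrArg Subtype.val this)
  obtain ⟨B, hBE, hB⟩ := exists_bad_subset hs _ hEP
  refine ⟨Subtype.val '' B, E \ Subtype.val '' B, ?_, Set.disjoint_sdiff_right, ?_⟩
  · rw [Set.union_sdiff_cancel]
    rintro _ ⟨y, hy, rfl⟩
    exact hBE hy
  · rintro ⟨C, hC, h1, h2⟩
    obtain ⟨U, hU, hm⟩ := hC P
    obtain ⟨x, hxC, hxE, hxB⟩ := hB U _ hU hm (fun y hy => h1 ⟨y, hy, rfl⟩)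
    have : (x : Y) ∈ C ∩ (E \ Subtype.val '' B) := by
      refine ⟨hxC, hxE, ?_⟩
      rintro ⟨y, hy, hyx⟩
      exact hxB (Subtype.val_injective hyx ▸ hy)
    rw [h2] at this
    exact this
end

section
/- Let Y be a second countable T1 topological space equipped with a finite, outer regular Borel measure μ which vanishes on singletons, and let E ⊆ Y. If the outer measure μ*(E) > 0, then E can be written as the union of two disjoint subsets E₁ and E₂ such that there is no null-measurable set C (measurable with respect to the completion of μ) with E₁ ⊆ C and C ∩ E₂ = ∅. -/
open MeasureTheory

/-- A set of positive outer measure contains, for some well order, a non-null subset all of whose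
proper initial segments are null. -/
lemma exists_null_segments {Y : Type*} [MeasurableSpace Y] [LinearOrder Y] [WellFoundedLT Y]
    (μ : Measure Y) (E : Set Y) (hE : μ E ≠ 0) :
    ∃ F ⊆ E, μ F ≠ 0 ∧ ∀ y ∈ F, μ {x | x ∈ F ∧ x < y} = 0 := by
  by_cases h : ∃ y, μ {x | x ∈ E ∧ x < y} ≠ 0
  · let y0 := WellFounded.min (wellFounded_lt (α := Y)) {y | μ {x | x ∈ E ∧ x < y} ≠ 0} h
    have h0 : μ {x | x ∈ E ∧ x < y0} ≠ 0 :=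
      WellFounded.min_mem (wellFounded_lt (α := Y)) {y | μ {x | x ∈ E ∧ x < y} ≠ 0} h
    refine ⟨{x | x ∈ E ∧ x < y0}, fun x hx => hx.1, h0, ?_⟩
    intro y hy
    by_contra hne
    have : μ {x | x ∈ E ∧ x < y} ≠ 0 := by
      intro h1
      refine hne (measure_mono_null ?_ h1)
      exact fun x hx => ⟨hx.1.1, hx.2⟩
    exact WellFounded.not_lt_min (wellFounded_lt (α := Y))
      {y | μ {x | x ∈ E ∧ x < y} ≠ 0} this hy.2
  · push Not at h
    exact ⟨E, subset_rfl, hE, fun y _ => h y⟩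

/-- **Corollary 5.8.** In a second countable T1 space with a finite outer regular
Borel measure vanishing on singletons, every set of positive outer measure splits
into two disjoint pieces which cannot be separated by a μ-measurable set. -/
theorem positive_outer_measure_not_measurably_separated {Y : Type*}
    [TopologicalSpace Y] [SecondCountableTopology Y] [T1Space Y]
    [MeasurableSpace Y] [BorelSpace Y]
    (μ : Measure Y) [IsFiniteMeasure μ] [μ.OuterRegular]
    (hpt : ∀ y : Y, μ {y} = 0) (E : Set Y) (hE : 0 < μ E) :
    ∃ E₁ E₂ : Set Y, E₁ ∪ E₂ = E ∧ Disjoint E₁ E₂ ∧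
      ¬ ∃ C : Set Y, NullMeasurableSet C μ ∧ E₁ ⊆ C ∧ C ∩ E₂ = ∅ := by
  by_contra hcon
  -- every subset of `E` is the trace of a measurable set, up to a null set
  have key : ∀ A : Set Y, A ⊆ E → ∃ C N : Set Y, MeasurableSet C ∧ μ N = 0 ∧
      ∀ y ∈ E, y ∉ N → (y ∈ C ↔ y ∈ A) := by
    intro A hA
    by_contra hno
    apply hcon
    refine ⟨A, E \ A, Set.union_sdiff_cancel hA, Set.disjoint_sdiff_right, ?_⟩
    rintro ⟨C, hC, hAC, hCE⟩
    apply hno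
    obtain ⟨t, ht, htC⟩ := hC
    refine ⟨t, {y | ¬ (y ∈ C ↔ y ∈ t)}, ht, ?_, ?_⟩
    · have := htC.mem_iff
      rwa [ae_iff] at this
    · intro y hy hyN
      have h1 : y ∈ C ↔ y ∈ t := by simpa using hyN
      rw [← h1]
      refine ⟨fun h => ?_, fun h => hAC h⟩
      by_contra hyA
      have : y ∈ C ∩ (E \ A) := ⟨h, hy, hyA⟩
      rw [hCE] at this
      exact this
  obtain ⟨_, hwf⟩ := exists_wellFoundedLT Y
  obtain ⟨F, hFE, hF, hseg⟩ := exists_null_segments μ E (ne_of_gt hE)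
  -- open covers of initial segments
  have hO : ∀ (k : ℕ) (y : Y), ∃ O : Set Y, IsOpen O ∧ (y ∈ F → {x | x ∈ F ∧ x < y} ⊆ O ∧
      μ O < ((k : ENNReal) + 1)⁻¹) := by
    intro k y
    by_cases hy : y ∈ F
    · obtain ⟨O, hO1, hO2, hO3⟩ := Set.exists_isOpen_lt_of_lt {x | x ∈ F ∧ x < y}
        (((k : ENNReal) + 1)⁻¹) (μ := μ) (by
          rw [hseg y hy]
          exact ENNReal.inv_pos.2 (by finiteness))
      exact ⟨O, hO2, fun _ => ⟨hO1, hO3⟩⟩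
    · exact ⟨∅, isOpen_empty, fun h => absurd h hy⟩
  choose O hOo hOF using hO
  let B := TopologicalSpace.countableBasis Y
  have hBc : Countable B := (TopologicalSpace.countable_countableBasis Y).to_subtype
  have hB := TopologicalSpace.isBasis_countableBasis Y
  choose C N hCm hN hCN using fun (k : ℕ) (U : B) =>
    key {y | y ∈ F ∧ (U : Set Y) ⊆ O k y} (fun y hy => hFE hy.1)
  let Nall : Set Y := ⋃ (k : ℕ) (U : B), N k U
  have hNall : μ Nall = 0 := by
    simp only [Nall, measure_iUnion_null_iff]
    exact hN
  let V : Set (Y × Y) := ⋂ k : ℕ, ⋃ U : B, (C k U) ×ˢ (U : Set Y)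
  have hVm : MeasurableSet V := by
    refine MeasurableSet.iInter fun k => MeasurableSet.iUnion fun U => (hCm k U).prod ?_
    exact (hB.isOpen U.2).measurableSet
  have hV : ∀ y ∈ F, y ∉ Nall → ∀ x, (y, x) ∈ V ↔ ∀ k, x ∈ O k y := by
    intro y hy hyN x
    simp only [V, Set.mem_iInter, Set.mem_iUnion, Set.mem_prod]
    have hyN2 : ∀ k U, y ∉ N k U := by
      intro k U h
      exact hyN (Set.mem_iUnion₂.2 ⟨k, U, h⟩)
    refine forall_congr' fun k => ⟨?_, ?_⟩
    · rintro ⟨U, h1, h2⟩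
      exact ((hCN k U y (hFE hy) (hyN2 k U)).1 h1).2 h2
    · intro hx
      obtain ⟨U, hU, hxU, hUO⟩ := hB.exists_subset_of_mem_open hx (hOo k y)
      exact ⟨⟨U, hU⟩, (hCN k ⟨U, hU⟩ y (hFE hy) (hyN2 k _)).2 ⟨hy, hUO⟩, hxU⟩
  let M := toMeasurable μ F
  let ρ := μ.restrict M
  -- measurable sets which are null in `F` are null for `ρ`
  have hρ : ∀ S : Set Y, MeasurableSet S → ρ S = μ (S ∩ F) := by
    intro S hS
    rw [Measure.restrict_apply hS, Set.inter_comm, Set.inter_comm S F]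
    exact Measure.measure_toMeasurable_inter_of_sFinite hS F
  have hprod : (ρ.prod μ) V = 0 := by
    rw [Measure.measure_prod_null hVm]
    have hm : MeasurableSet {y | ¬ (μ (Prod.mk y ⁻¹' V) = 0)} :=
      (measurable_measure_prodMk_left hVm (measurableSet_singleton 0)).compl
    change ∀ᵐ y ∂ρ, μ (Prod.mk y ⁻¹' V) = 0
    rw [ae_iff, hρ _ hm]
    refine measure_mono_null ?_ hNall
    rintro y ⟨hy, hyF⟩
    by_contra hyN
    apply hy
    by_contra hne
    obtain ⟨k, hk⟩ := ENNReal.exists_inv_nat_lt hne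
    have h1 : μ (Prod.mk y ⁻¹' V) ≤ μ (O k y) :=
      measure_mono fun x hx => (hV y hyF hyN x).1 hx k
    have h2 : ((k : ENNReal) + 1)⁻¹ ≤ (k : ENNReal)⁻¹ := ENNReal.inv_le_inv.2 le_self_add
    exact absurd (h1.trans_lt ((hOF k y hyF).2.trans_le h2)) (not_lt.2 hk.le)
  rw [Measure.prod_apply_symm hVm, lintegral_eq_zero_iff (measurable_measure_prodMk_right hVm)]
    at hprod
  have hae : ∀ᵐ x ∂μ, ρ ((fun y => (y, x)) ⁻¹' V) = 0 := hprod
  rw [ae_iff] at hae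
  obtain ⟨x, hxF, hx⟩ : ∃ x ∈ F, ρ ((fun y => (y, x)) ⁻¹' V) = 0 := by
    by_contra! h
    exact hF (measure_mono_null (fun x hx => h x hx) hae)
  rw [hρ _ (measurable_prodMk_right hVm)] at hx
  apply hF
  refine measure_mono_null (t := ((fun y => (y, x)) ⁻¹' V ∩ F) ∪ Nall ∪
    ({y | y ∈ F ∧ y < x} ∪ {x})) ?_ ?_
  · intro y hy
    by_cases hyN : y ∈ Nall
    · exact Or.inl (Or.inr hyN)
    rcases lt_trichotomy y x with h | h | h
    · exact Or.inr (Or.inl ⟨hy, h⟩)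
    · exact Or.inr (Or.inr h)
    · exact Or.inl (Or.inl ⟨(hV y hy hyN x).2 fun k => (hOF k y hy).1 ⟨hxF, h⟩, hy⟩)
  · exact measure_union_null (measure_union_null hx hNall)
      (measure_union_null (hseg x hxF) (hpt x))
end

section
/- Let Y be a second countable T1 topological space and let 𝔑 denote the family of all finite, outer regular Borel measures on Y that vanish on singletons. If E ⊆ Y is not universally 𝔑-null (there exists μ ∈ 𝔑 with μ*(E) > 0), then E can be written as the union of two disjoint subsets E₁ and E₂ such that there is no set C that is null-measurable with respect to every μ ∈ 𝔑 and satisfies E₁ ⊆ C and C ∩ E₂ = ∅. -/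
open MeasureTheory

/-- Fubini argument. -/
lemma key_fubini {Y : Type*} [TopologicalSpace Y] [SecondCountableTopology Y] [MeasurableSpace Y]
    [BorelSpace Y] (μ : Measure Y) [μ.OuterRegular]
    {I : Type*} [LinearOrder I] [MeasurableSpace I] (hI : ∀ s : Set I, MeasurableSet s)
    (x : I → Y) (m : Measure I) [SFinite m] (hm : ∀ s : Set I, m s = μ (x '' s))
    (hnull : ∀ a, m (Set.Iic a) = 0) : m Set.univ = 0 := by
  have h1 : ∀ (a : I) (n : ℕ), ∃ U : Set Y, x '' Set.Iic a ⊆ U ∧ IsOpen U ∧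
      μ U < ((n : ENNReal) + 1)⁻¹ := by
    intro a n
    have h0 : μ (x '' Set.Iic a) < ((n : ENNReal) + 1)⁻¹ := by
      rw [← hm, hnull]
      simp
    obtain ⟨U, hU, ho, hl⟩ := Set.exists_isOpen_lt_of_lt _ _ h0
    exact ⟨U, hU, ho, hl⟩
  choose U hsub hopen hlt using h1
  let B := TopologicalSpace.countableBasis Y
  have hB : TopologicalSpace.IsTopologicalBasis B := TopologicalSpace.isBasis_countableBasis Y
  have hBc : B.Countable := TopologicalSpace.countable_countableBasis Y
  let D : Set (I × I) := {p | ∀ n, x p.1 ∈ U p.2 n}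
  have hD : MeasurableSet D := by
    have : D = ⋂ n : ℕ, ⋃ b ∈ B, (x ⁻¹' b) ×ˢ {a | b ⊆ U a n} := by
      ext ⟨p, q⟩
      simp only [D, Set.mem_setOf_eq, Set.mem_iInter, Set.mem_iUnion, Set.mem_prod,
        Set.mem_preimage]
      refine forall_congr' fun n => ?_
      constructor
      · intro h
        obtain ⟨b, hb, h1, h2⟩ := hB.exists_subset_of_mem_open h (hopen q n)
        exact ⟨b, hb, h1, h2⟩
      · rintro ⟨b, hb, h1, h2⟩
        exact h2 h1
    rw [this]
    exact MeasurableSet.iInter fun n => MeasurableSet.biUnion hBc fun b _ =>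
      (hI _).prod (hI _)
  have hz : (m.prod m) D = 0 := by
    rw [Measure.prod_apply_symm hD]
    rw [lintegral_eq_zero_iff (measurable_measure_prodMk_right hD)]
    refine Filter.Eventually.of_forall fun a => ?_
    change m _ = 0
    rw [hm]
    by_contra hne
    obtain ⟨n, hn⟩ := ENNReal.exists_inv_nat_lt hne
    have h2 : μ (x '' ((fun y => (y, a)) ⁻¹' D)) ≤ μ (U a n) := by
      apply measure_mono
      rintro _ ⟨y, hy, rfl⟩
      exact hy n
    have h3 : ((n : ENNReal) + 1)⁻¹ ≤ (n : ENNReal)⁻¹ :=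
      ENNReal.inv_le_inv.2 le_self_add
    exact absurd (hn.trans_le (h2.trans ((hlt a n).le.trans h3))) (lt_irrefl _)
  have hae := Measure.measure_ae_null_of_prod_null hz
  by_contra hne
  have : (ae m).NeBot := by
    rw [ae_neBot]
    rintro rfl
    simp at hne
  obtain ⟨b, hb⟩ := hae.exists
  apply hne
  have hc : (Set.univ : Set I) ⊆ Set.Iic b ∪ (Prod.mk b ⁻¹' D) := by
    intro a _
    rcases le_or_gt a b with h | h
    · exact Or.inl h
    · exact Or.inr fun n => hsub a n ⟨b, h.le, rfl⟩
  exact measure_mono_null hc (measure_union_null (hnull b) hb)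

/-- **Corollary 5.10.** Let `𝔑` be the family of all finite outer regular Borel
measures vanishing on singletons. Every set that is not universally `𝔑`-null
splits into two disjoint pieces which cannot be separated by a universally
`𝔑`-measurable set. -/
theorem not_universally_null_not_separated {Y : Type*} [TopologicalSpace Y]
    [SecondCountableTopology Y] [T1Space Y] [MeasurableSpace Y] [BorelSpace Y]
    (E : Set Y)
    (hE : ∃ μ : Measure Y, IsFiniteMeasure μ ∧ μ.OuterRegular ∧
      (∀ y : Y, μ {y} = 0) ∧ 0 < μ E) :
    ∃ E₁ E₂ : Set Y, E₁ ∪ E₂ = E ∧ Disjoint E₁ E₂ ∧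
      ¬ ∃ C : Set Y,
        (∀ μ : Measure Y, IsFiniteMeasure μ → μ.OuterRegular →
          (∀ y : Y, μ {y} = 0) → NullMeasurableSet C μ) ∧
        E₁ ⊆ C ∧ C ∩ E₂ = ∅ := by
  obtain ⟨μ, hfin, hreg, hpt, hpos⟩ := hE
  by_contra hcon
  push Not at hcon
  have hsep : ∀ S : Set Y, ∃ C : Set Y, NullMeasurableSet C μ ∧
      ∀ y ∈ E, (y ∈ C ↔ y ∈ S) := by
    intro S
    obtain ⟨C, hC, h1, h2⟩ := hcon (E ∩ S) (E \ S) (Set.inter_union_diff E S)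
      Set.disjoint_sdiff_inter.symm
    refine ⟨C, hC μ hfin hreg hpt, fun y hy => ⟨fun hyC => ?_, fun hyS => h1 ⟨hy, hyS⟩⟩⟩
    by_contra hyS
    have : y ∈ C ∩ (E \ S) := ⟨hyC, hy, hyS⟩
    rw [h2] at this
    exact this
  obtain ⟨c, ⟨F, hFE, hF, rfl⟩, hmin⟩ := WellFounded.has_min
    (Cardinal.lt_wf) {c : Cardinal | ∃ F : Set Y, F ⊆ E ∧ 0 < μ F ∧ Cardinal.mk F = c}
    ⟨_, E, subset_rfl, hpos, rfl⟩
  let I := (Cardinal.mk F).ord.ToType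
  have hIF : Cardinal.mk I = Cardinal.mk F := Cardinal.mk_ord_toType _
  obtain ⟨e⟩ := Cardinal.eq.1 hIF
  let x : I → Y := fun i => (e i : Y)
  have hxinj : Function.Injective x := Subtype.val_injective.comp e.injective
  have hxE : ∀ i, x i ∈ E := fun i => hFE (e i).2
  letI : MeasurableSpace I := ⊤
  let o : OuterMeasure I := OuterMeasure.comap x μ.toOuterMeasure
  have ho : ∀ s, o s = μ (x '' s) := fun s => rfl
  have hcar : (⊤ : MeasurableSpace I) ≤ o.caratheodory := by
    intro s _
    rw [OuterMeasure.isCaratheodory_iff]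
    intro t
    obtain ⟨C, hC, hCS⟩ := hsep (x '' s)
    rw [ho, ho, ho, ← measure_inter_add_diff₀ (x '' t) hC]
    congr 2
    · ext y
      constructor
      · rintro ⟨⟨i, hi, rfl⟩, hy⟩
        obtain ⟨j, hj, hji⟩ := (hCS _ (hxE i)).1 hy
        exact ⟨i, ⟨hi, hxinj hji ▸ hj⟩, rfl⟩
      · rintro ⟨i, ⟨hi, his⟩, rfl⟩
        exact ⟨⟨i, hi, rfl⟩, (hCS _ (hxE i)).2 ⟨i, his, rfl⟩⟩
    · ext y
      constructor
      · rintro ⟨⟨i, hi, rfl⟩, hy⟩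
        exact ⟨i, ⟨hi, fun his => hy ((hCS _ (hxE i)).2 ⟨i, his, rfl⟩)⟩, rfl⟩
      · rintro ⟨i, ⟨hi, his⟩, rfl⟩
        refine ⟨⟨i, hi, rfl⟩, fun hy => his ?_⟩
        obtain ⟨j, hj, hji⟩ := (hCS _ (hxE i)).1 hy
        exact hxinj hji ▸ hj
  let m : Measure I := o.toMeasure hcar
  have hI : ∀ s : Set I, MeasurableSet s := fun s => trivial
  have hm : ∀ s : Set I, m s = μ (x '' s) := fun s =>
    (toMeasure_apply o hcar (hI s)).trans (ho s)
  haveI : IsFiniteMeasure m := ⟨by rw [hm]; exact measure_lt_top _ _⟩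
  have hnull : ∀ a, m (Set.Iic a) = 0 := by
    intro a
    rw [← Set.Iio_insert, Set.insert_eq]
    refine measure_union_null ?_ ?_
    · rw [hm, Set.image_singleton]
      exact hpt _
    · rw [hm]
      by_contra hne
      refine hmin _ ⟨x '' Set.Iio a, ?_, pos_iff_ne_zero.2 hne, rfl⟩ ?_
      · rintro _ ⟨i, _, rfl⟩
        exact hxE i
      · exact Cardinal.mk_image_le.trans_lt (Cardinal.mk_Iio_ord_toType a)
  have hz := key_fubini μ hI x m hm hnull
  rw [hm, Set.image_univ] at hz
  have hr : Set.range x = F := by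
    ext y
    constructor
    · rintro ⟨i, rfl⟩
      exact (e i).2
    · intro hy
      exact ⟨e.symm ⟨y, hy⟩, by simp [x]⟩
  rw [hr] at hz
  exact hF.ne' hz
end

section
/- Let Y be a second countable topological space equipped with a finite, outer regular Borel measure μ, and let {A_γ : γ ∈ Γ} be a point-finite family of subsets of Y (each point of the union belongs to at most finitely many A_γ) with μ*(A_γ) = 0 for every γ. If the outer measure of the union E = ⋃_{γ∈Γ} A_γ satisfies μ*(E) > 0, then there exists Θ ⊆ Γ such that ⋃_{γ∈Θ} A_γ is not null-measurable (not measurable with respect to the completion of μ). -/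
open MeasureTheory

theorem main_aux {Y : Type*}
    [TopologicalSpace Y] [SecondCountableTopology Y] [MeasurableSpace Y]
    [BorelSpace Y] (μ : Measure Y) [IsFiniteMeasure μ] [μ.OuterRegular]
    {Γ : Type*} [LinearOrder Γ] (A : Γ → Set Y)
    (hpf : ∀ x : Y, {γ : Γ | x ∈ A γ}.Finite)
    (hnull : ∀ γ, μ (⋃ β ∈ Set.Iic γ, A β) = 0)
    (hmeas : ∀ Θ : Set Γ, NullMeasurableSet (⋃ γ ∈ Θ, A γ) μ) :
    μ (⋃ γ, A γ) = 0 := by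
  have hG : ∀ (k : ℕ) (γ : Γ), ∃ G : Set Y, (⋃ β ∈ Set.Iic γ, A β) ⊆ G ∧ IsOpen G ∧
      μ G < ((k : ENNReal) + 1)⁻¹ := by
    intro k γ
    apply Set.exists_isOpen_lt_of_lt
    rw [hnull γ]
    simp
  choose G hGsub hGo hGlt using hG
  let b := TopologicalSpace.countableBasis Y
  have hb : TopologicalSpace.IsTopologicalBasis b :=
    TopologicalSpace.isBasis_countableBasis Y
  have hbc : Countable b := (TopologicalSpace.countable_countableBasis Y).to_subtype
  let C : ℕ → b → Set Y := fun k s => ⋃ γ ∈ {γ | (s : Set Y) ⊆ G k γ}, A γ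
  have hC : ∀ k s, ∃ M, MeasurableSet M ∧ M =ᵐ[μ] C k s := fun k s => by
    obtain ⟨M, -, h1, h2⟩ := (hmeas {γ | (s : Set Y) ⊆ G k γ}).exists_measurable_superset_ae_eq
    exact ⟨M, h1, h2⟩
  choose M hM hMC using hC
  let K : Set (Y × Y) := ⋂ k, ⋃ s : b, M k s ×ˢ (s : Set Y)
  have hK : MeasurableSet K := by
    refine MeasurableSet.iInter fun k => MeasurableSet.iUnion fun s => (hM k s).prod ?_
    exact (hb.isOpen s.2).measurableSet
  have hae : ∀ᵐ z ∂μ, ∀ k s, (z ∈ M k s ↔ z ∈ C k s) := by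
    rw [ae_all_iff]; intro k
    rw [ae_all_iff]; intro s
    exact (hMC k s).mem_iff
  have h1 : ∀ᵐ z ∂μ, ∀ᵐ y ∂μ, (z, y) ∉ K := by
    filter_upwards [hae] with z hz
    have hsub : ∀ k, {y | (z, y) ∈ K} ⊆ ⋃ γ ∈ (hpf z).toFinset, G k γ := by
      intro k y hy
      obtain ⟨s, hs1, hs2⟩ := Set.mem_iUnion.1 (Set.mem_iInter.1 hy k)
      have := (hz k s).1 hs1
      simp only [C, Set.mem_iUnion, Set.mem_ofPred_eq] at this
      obtain ⟨γ, h1, h2⟩ := this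
      simp only [Set.mem_iUnion]
      exact ⟨γ, by simpa using h2, h1 hs2⟩
    have hle : ∀ k : ℕ, μ {y | (z, y) ∈ K} ≤ (hpf z).toFinset.card * ((k : ENNReal) + 1)⁻¹ := by
      intro k
      refine (measure_mono (hsub k)).trans ((measure_biUnion_finset_le _ _).trans ?_)
      refine (Finset.sum_le_sum fun γ _ => (hGlt k γ).le).trans ?_
      simp
    have hlim : Filter.Tendsto (fun k : ℕ => ((hpf z).toFinset.card : ENNReal) *
        ((k : ENNReal) + 1)⁻¹) Filter.atTop (nhds 0) := by
      have h0 : Filter.Tendsto (fun k : ℕ => ((k : ENNReal) + 1)⁻¹) Filter.atTop (nhds 0) := by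
        have := (Filter.tendsto_add_atTop_iff_nat 1).2 ENNReal.tendsto_inv_nat_nhds_zero
        simpa using this
      simpa using ENNReal.Tendsto.const_mul h0 (Or.inr (ENNReal.natCast_ne_top _))
    have h0 : μ {y | (z, y) ∈ K} = 0 :=
      le_antisymm (ge_of_tendsto' hlim hle) bot_le
    rw [ae_iff]
    simpa using h0
  have h2 : ∀ᵐ y ∂μ, ∀ᵐ z ∂μ, (z, y) ∉ K :=
    (Measure.ae_ae_comm (p := fun z y => (z, y) ∉ K) hK.compl).1 h1
  by_contra hne
  apply hne
  refine measure_mono_null ?_ (ae_iff.1 h2)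
  intro y hy h3
  apply hne
  obtain ⟨β, hβ⟩ := Set.mem_iUnion.1 hy
  have h4 : ∀ᵐ z ∂μ, z ∉ ⋃ γ ∈ Set.Iic β, A γ := measure_eq_zero_iff_ae_notMem.1 (hnull β)
  apply measure_eq_zero_iff_ae_notMem.2
  filter_upwards [h3, h4, hae] with z hz3 hz4 hz hzE
  obtain ⟨γ, hγ⟩ := Set.mem_iUnion.1 hzE
  have hlt : β ≤ γ := by
    by_contra hcon
    apply hz4
    simp only [Set.mem_iUnion]
    exact ⟨γ, (not_le.1 hcon).le, hγ⟩
  apply hz3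
  refine Set.mem_iInter.2 fun k => ?_
  have hyG : y ∈ G k γ := hGsub k γ (by
    simp only [Set.mem_iUnion]
    exact ⟨β, hlt, hβ⟩)
  obtain ⟨s, hs, hys, hsG⟩ := hb.exists_subset_of_mem_open hyG (hGo k γ)
  refine Set.mem_iUnion.2 ⟨⟨s, hs⟩, (hz k ⟨s, hs⟩).2 ?_, hys⟩
  simp only [C, Set.mem_iUnion]
  exact ⟨γ, hsG, hγ⟩

/-- **Prikry's Proposition (measure part).** A point-finite family of outer-null
sets whose union has positive outer measure admits a non-measurable subunion. -/
theorem pointFinite_null_family_nonmeasurable_subunion {Y : Type*}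
    [TopologicalSpace Y] [SecondCountableTopology Y] [MeasurableSpace Y]
    [BorelSpace Y] (μ : Measure Y) [IsFiniteMeasure μ] [μ.OuterRegular]
    {Γ : Type*} (A : Γ → Set Y)
    (hpf : ∀ x : Y, {γ : Γ | x ∈ A γ}.Finite)
    (hnull : ∀ γ, μ (A γ) = 0) (hE : 0 < μ (⋃ γ, A γ)) :
    ∃ Θ : Set Γ, ¬ NullMeasurableSet (⋃ γ ∈ Θ, A γ) μ := by
  by_contra! hmeas
  obtain ⟨_, _⟩ := exists_wellFoundedLT Γ
  have key : ∀ γ, μ (⋃ β ∈ Set.Iio γ, A β) = 0 := by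
    intro γ
    induction γ using WellFoundedLT.induction with
    | ind γ ih =>
      have := main_aux μ (fun β : Set.Iio γ => A β)
        (fun x => (hpf x).preimage Subtype.val_injective.injOn)
        (fun β => by
          refine measure_mono_null (t := (⋃ δ ∈ Set.Iio β.1, A δ) ∪ A β.1) ?_
            (measure_union_null (ih β.1 β.2) (hnull _))
          intro y hy
          simp only [Set.mem_iUnion] at hy
          obtain ⟨δ, hδ, hy⟩ := hy
          rcases lt_or_eq_of_le hδ with h | h
          · left
            simp only [Set.mem_iUnion]
            exact ⟨δ.1, h, hy⟩
          · right
            rw [← h]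
            exact hy)
        (fun Θ => by
          have := hmeas (Subtype.val '' Θ)
          rwa [Set.biUnion_image] at this)
      rwa [Set.biUnion_eq_iUnion]
  refine hE.ne' (main_aux μ A hpf (fun γ => ?_) hmeas)
  refine measure_mono_null (t := (⋃ δ ∈ Set.Iio γ, A δ) ∪ A γ) ?_
    (measure_union_null (key γ) (hnull _))
  intro y hy
  simp only [Set.mem_iUnion] at hy
  obtain ⟨δ, hδ, hy⟩ := hy
  rcases lt_or_eq_of_le hδ with h | h
  · left
    simp only [Set.mem_iUnion]
    exact ⟨δ, h, hy⟩
  · right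
    subst h
    exact hy
end

section
/- Let Y be a second countable topological space and let {A_γ : γ ∈ Γ} be a point-finite family of meager subsets of Y (each point of the union belongs to at most finitely many A_γ). If the union E = ⋃_{γ∈Γ} A_γ is non-meager, then there exists Θ ⊆ Γ such that ⋃_{γ∈Θ} A_γ does not have the Baire property. -/
open Set

theorem frontier_meagre {Y : Type*} [TopologicalSpace Y] {D : Set Y} (hD : IsClosed D) :
    IsMeagre (frontier D) := by
  refine IsNowhereDense.isMeagre ?_
  rw [isClosed_frontier.isNowhereDense_iff]
  exact interior_frontier hD

theorem BP_compl {Y : Type*} [TopologicalSpace Y] {s : Set Y} (h : HasBaireProperty s) :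
    ∃ V N : Set Y, IsOpen V ∧ IsMeagre N ∧ ∀ y, y ∉ N → (y ∈ sᶜ ↔ y ∈ V) := by
  obtain ⟨U, hU, hm⟩ := h
  refine ⟨(closure U)ᶜ, symmDiff s U ∪ frontier U, isClosed_closure.isOpen_compl, ?_, ?_⟩
  · exact hm.union (frontier_compl U ▸ frontier_meagre hU.isClosed_compl)
  · intro y hy
    have h2 : y ∈ closure U ↔ y ∈ U := by
      rw [hU.frontier_eq] at hy
      have := @subset_closure _ _ U y
      simp only [mem_union, mem_diff, not_or, not_and, not_not] at hy
      tauto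
    simp only [mem_union, mem_symmDiff, mem_compl_iff, h2] at hy ⊢
    tauto

theorem closed_meagre {Y : Type*} [TopologicalSpace Y] {D N : Set Y} (hD : IsClosed D)
    (hN : IsMeagre N) (h : interior D ⊆ N) : IsMeagre D := by
  have h1 : IsMeagre (frontier D) := frontier_meagre hD
  refine (h1.union hN).mono ?_
  intro x hx
  by_cases hi : x ∈ interior D
  · exact Or.inr (h hi)
  · exact Or.inl ⟨subset_closure hx, hi⟩

theorem key_lemma {Y : Type*}
    [TopologicalSpace Y] [SecondCountableTopology Y]
    {Γ : Type*} (A : Γ → Set Y)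
    (hpf : ∀ x : Y, {γ : Γ | x ∈ A γ}.Finite)
    (M : Γ → Set Y) (hM : ∀ γ, IsMeagre (M γ))
    (hE : ¬ IsMeagre (⋃ γ, A γ))
    (hx : ∀ x ∈ ⋃ γ, A γ, IsMeagre ((⋃ γ, A γ) \ ⋃ γ ∈ {γ | x ∈ M γ}, A γ)) :
    ∃ Θ : Set Γ, ¬ HasBaireProperty (⋃ γ ∈ Θ, A γ) := by
  by_contra! hBP
  -- closed nowhere dense covers
  have hC : ∀ γ, ∃ C : ℕ → Set Y, (∀ n, IsClosed (C n) ∧ interior (C n) = ∅) ∧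
      M γ ⊆ ⋃ n, C n := by
    intro γ
    obtain ⟨S, hS, hc, hsub⟩ := isMeagre_iff_countable_union_isNowhereDense.1 (hM γ)
    have hc' : (insert ∅ S).Countable := hc.insert ∅
    obtain ⟨f, hf⟩ := hc'.exists_eq_range ⟨∅, mem_insert _ _⟩
    refine ⟨fun n => closure (f n), fun n => ⟨isClosed_closure, ?_⟩, ?_⟩
    · have : f n ∈ insert ∅ S := hf ▸ mem_range_self n
      rcases this with h | h
      · simp [h]
      · exact hS _ h
    · intro x hxM
      obtain ⟨t, ht, hxt⟩ := hsub hxM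
      have : t ∈ range f := hf ▸ mem_insert_of_mem _ ht
      obtain ⟨n, rfl⟩ := this
      exact mem_iUnion.2 ⟨n, subset_closure hxt⟩
  choose C hC hMC using hC
  obtain ⟨b, hbc, -, hb⟩ := TopologicalSpace.exists_countable_basis Y
  have : Countable b := hbc.to_subtype
  -- Baire approximations
  have hV : ∀ (n : ℕ) (k : b), ∃ V N : Set Y, IsOpen V ∧ IsMeagre N ∧ ∀ y, y ∉ N →
      ((∀ γ, y ∈ A γ → Disjoint k.1 (C γ n)) ↔ y ∈ V) := by
    intro n k
    obtain ⟨V, N, h1, h2, h3⟩ := BP_compl (hBP {γ | ¬ Disjoint k.1 (C γ n)})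
    refine ⟨V, N, h1, h2, fun y hy => ?_⟩
    rw [← h3 y hy]
    simp only [mem_compl_iff, mem_iUnion, mem_ofPred_eq, not_exists]
    exact forall_congr' fun γ => by tauto
  choose V N hVo hN hVN using hV
  set N' : Set Y := ⋃ n, ⋃ k, N n k with hN'
  have hN'm : IsMeagre N' := isMeagre_iUnion fun n => isMeagre_iUnion fun k => hN n k
  have hVN' : ∀ n k y, y ∉ N' → ((∀ γ, y ∈ A γ → Disjoint k.1 (C γ n)) ↔ y ∈ V n k) := by
    intro n k y hy
    refine hVN n k y fun h => hy ?_
    exact mem_iUnion₂.2 ⟨n, k, h⟩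
  -- projections
  let P : ℕ → b → Set Y := fun n j => ⋃ k ∈ {k : b | ((V n k ∩ j.1) \ N').Nonempty}, k.1
  have hP : ∀ n j, (j.1 \ N').Nonempty → IsMeagre (P n j)ᶜ := by
    rintro n j ⟨y, hyj, hyN⟩
    have hPo : IsOpen (P n j) := isOpen_biUnion fun k _ => hb.isOpen k.2
    have hcl : IsClosed (⋃ γ ∈ {γ | y ∈ A γ}, C γ n) :=
      (hpf y).isClosed_biUnion fun γ _ => (hC γ n).1
    have hme : IsMeagre (⋃ γ ∈ {γ | y ∈ A γ}, C γ n) := by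
      refine isMeagre_biUnion (hpf y).countable fun γ _ => ?_
      refine IsNowhereDense.isMeagre ?_
      rw [(hC γ n).1.isNowhereDense_iff]
      exact (hC γ n).2
    refine hme.mono ?_
    intro x hxP
    by_contra hxC
    obtain ⟨k, hk, hxk, hkC⟩ := hb.exists_subset_of_mem_open (show x ∈ _ᶜ from hxC)
      hcl.isOpen_compl
    refine hxP (mem_iUnion₂.2 ⟨⟨k, hk⟩, ?_, hxk⟩)
    refine ⟨y, ⟨(hVN' n ⟨k, hk⟩ y hyN).1 ?_, hyj⟩, hyN⟩
    intro γ hγ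
    rw [Set.disjoint_left]
    intro z hz hzC
    exact hkC hz (mem_iUnion₂.2 ⟨γ, hγ, hzC⟩)
  have hQ : IsMeagre (⋃ n, ⋃ j : b, ⋃ _ : (j.1 \ N').Nonempty, (P n j)ᶜ) :=
    isMeagre_iUnion fun n => isMeagre_iUnion fun j => isMeagre_iUnion fun h => hP n j h
  obtain ⟨x, hxE, hxQ⟩ : ∃ x ∈ ⋃ γ, A γ,
      x ∉ (⋃ n, ⋃ j : b, ⋃ _ : (j.1 \ N').Nonempty, (P n j)ᶜ) := by
    by_contra! h
    exact hE (hQ.mono h)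
  simp only [mem_iUnion, not_exists, mem_compl_iff, not_not] at hxQ
  let D : ℕ → Set Y := fun n => (⋃ k ∈ {k : b | x ∈ k.1}, V n k)ᶜ
  have hD : ∀ n, IsMeagre (D n) := by
    intro n
    refine closed_meagre (isOpen_biUnion fun k _ => hVo n k).isClosed_compl hN'm ?_
    intro y hy
    by_contra hyN
    obtain ⟨j, hj, hyj, hjD⟩ := hb.exists_subset_of_mem_open hy isOpen_interior
    obtain ⟨k, ⟨z, ⟨hzV, hzj⟩, hzN⟩, hxk⟩ := mem_iUnion₂.1 (hxQ n ⟨j, hj⟩ ⟨y, hyj, hyN⟩)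
    exact interior_subset (hjD hzj) (mem_iUnion₂.2 ⟨k, hxk, hzV⟩)
  refine hE (((hx x hxE).union (hN'm.union (isMeagre_iUnion hD))).mono ?_)
  intro y hy
  by_cases h1 : y ∈ ⋃ γ ∈ {γ | x ∈ M γ}, A γ
  · right
    by_cases h2 : y ∈ N'
    · exact Or.inl h2
    right
    obtain ⟨γ, hxγ, hyγ⟩ := mem_iUnion₂.1 h1
    obtain ⟨n, hn⟩ := mem_iUnion.1 (hMC γ hxγ)
    refine mem_iUnion.2 ⟨n, fun h => ?_⟩
    obtain ⟨k, hxk, hyV⟩ := mem_iUnion₂.1 h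
    exact Set.disjoint_left.1 ((hVN' n k y h2).2 hyV γ hyγ) hxk hn
  · exact Or.inl ⟨hy, h1⟩

theorem key_order {Y : Type*}
    [TopologicalSpace Y] [SecondCountableTopology Y]
    {Γ : Type*} [LinearOrder Γ] (A : Γ → Set Y)
    (hpf : ∀ x : Y, {γ : Γ | x ∈ A γ}.Finite)
    (hmeager : ∀ γ, IsMeagre (A γ)) (hE : ¬ IsMeagre (⋃ γ, A γ))
    (hI : ∀ γ, IsMeagre (⋃ β ∈ Iio γ, A β)) :
    ∃ Θ : Set Γ, ¬ HasBaireProperty (⋃ γ ∈ Θ, A γ) := by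
  refine key_lemma A hpf (fun γ => ⋃ β ∈ Iio γ, A β) hI hE ?_
  intro x hx
  obtain ⟨β, hβ⟩ := mem_iUnion.1 hx
  refine ((hI β).union (hmeager β)).mono ?_
  rintro y ⟨hy, hy2⟩
  obtain ⟨γ, hγ⟩ := mem_iUnion.1 hy
  rcases lt_trichotomy γ β with h | h | h
  · exact Or.inl (mem_iUnion₂.2 ⟨γ, h, hγ⟩)
  · exact Or.inr (h ▸ hγ)
  · exact (hy2 (mem_iUnion₂.2 ⟨γ, mem_iUnion₂.2 ⟨β, h, hβ⟩, hγ⟩)).elim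

/-- **Prikry's Proposition (Baire part).** A point-finite family of meager sets
whose union is non-meager admits a subunion without the Baire property. -/
theorem pointFinite_meager_family_nonBaire_subunion {Y : Type*}
    [TopologicalSpace Y] [SecondCountableTopology Y]
    {Γ : Type*} (A : Γ → Set Y)
    (hpf : ∀ x : Y, {γ : Γ | x ∈ A γ}.Finite)
    (hmeager : ∀ γ, IsMeagre (A γ)) (hE : ¬ IsMeagre (⋃ γ, A γ)) :
    ∃ Θ : Set Γ, ¬ HasBaireProperty (⋃ γ ∈ Θ, A γ) := by
  obtain ⟨_, hwf⟩ := exists_wellFoundedLT Γ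
  by_cases hI : ∀ γ, IsMeagre (⋃ β ∈ Iio γ, A β)
  · exact key_order A hpf hmeager hE hI
  push Not at hI
  obtain ⟨α, hα, hmin⟩ := hwf.wf.has_min {γ | ¬ IsMeagre (⋃ β ∈ Iio γ, A β)} hI
  obtain ⟨Θ, hΘ⟩ := key_order (fun γ : Iio α => A γ)
    (fun x => (hpf x).preimage Subtype.val_injective.injOn) (fun γ => hmeager γ)
    (by rwa [mem_ofPred_eq, biUnion_eq_iUnion] at hα)
    (by
      intro γ
      have : IsMeagre (⋃ β ∈ Iio γ.1, A β) := by
        by_contra h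
        exact hmin γ.1 h γ.2
      refine this.mono ?_
      intro y hy
      obtain ⟨β, h, h'⟩ := mem_iUnion₂.1 hy
      exact mem_iUnion₂.2 ⟨β.1, h, h'⟩)
  refine ⟨Subtype.val '' Θ, ?_⟩
  rwa [biUnion_image]
end

section
/- Let Y be a second countable topological space equipped with a finite, outer regular Borel measure μ, and let {A_γ : γ ∈ Γ} be a point-finite family of subsets of Y with μ*(A_γ) = 0 for every γ. If the outer measure of the union E = ⋃_{γ∈Γ} A_γ satisfies μ*(E) > 0, then there exists Θ ⊆ Γ such that there is no null-measurable set C ⊆ Y (measurable with respect to the completion of μ) with C ∩ E = ⋃_{γ∈Θ} A_γ. -/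
open MeasureTheory

/-- Core case: a well-ordered subfamily all of whose initial segments are null. -/
theorem core_aux {Y : Type*}
    [TopologicalSpace Y] [SecondCountableTopology Y] [MeasurableSpace Y]
    [BorelSpace Y] (μ : Measure Y) [IsFiniteMeasure μ] [μ.OuterRegular]
    {Γ : Type*} [LinearOrder Γ] (A : Γ → Set Y)
    (hpf : ∀ x : Y, {γ : Γ | x ∈ A γ}.Finite) (S : Set Γ)
    (hS : ∀ γ ∈ S, μ (⋃ β ∈ {β | β ∈ S ∧ β ≤ γ}, A β) = 0)
    (C : Set Γ → Set Y) (hCm : ∀ Θ, NullMeasurableSet (C Θ) μ)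
    (hC : ∀ Θ, C Θ ∩ (⋃ γ, A γ) = ⋃ γ ∈ Θ, A γ) :
    μ (⋃ γ ∈ S, A γ) = 0 := by
  classical
  have hU : ∀ (k : ℕ) (γ : Γ), ∃ U : Set Y, IsOpen U ∧
      (γ ∈ S → (⋃ β ∈ {β | β ∈ S ∧ β ≤ γ}, A β) ⊆ U ∧ μ U ≤ ((k : ENNReal) + 1)⁻¹) := by
    intro k γ
    by_cases h : γ ∈ S
    · obtain ⟨U, hsub, ho, hlt⟩ := Set.exists_isOpen_lt_of_lt
        (μ := μ) (⋃ β ∈ {β | β ∈ S ∧ β ≤ γ}, A β) (((k : ENNReal) + 1)⁻¹) (by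
          rw [hS γ h]
          exact ENNReal.inv_pos.2 (by finiteness))
      exact ⟨U, ho, fun _ => ⟨hsub, hlt.le⟩⟩
    · exact ⟨∅, isOpen_empty, fun h' => absurd h' h⟩
  choose U hUo hUS using hU
  let B := TopologicalSpace.countableBasis Y
  have hB := TopologicalSpace.isBasis_countableBasis Y
  have : Countable B := (TopologicalSpace.countable_countableBasis Y).to_subtype
  let Th : ℕ → B → Set Γ := fun k b => {γ | γ ∈ S ∧ (b : Set Y) ⊆ U k γ}
  have hD : ∀ (k : ℕ) (b : B), ∃ D : Set Y, MeasurableSet D ∧ ∀ᵐ x ∂μ, x ∈ D ↔ x ∈ C (Th k b) := by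
    intro k b
    obtain ⟨D, hDm, hDe⟩ := hCm (Th k b)
    refine ⟨D, hDm, ?_⟩
    filter_upwards [hDe] with x hx
    exact (iff_of_eq hx).symm
  choose D hDm hDe using hD
  have hae : ∀ᵐ x ∂μ, ∀ k b, x ∈ D k b ↔ x ∈ C (Th k b) := by
    rw [ae_all_iff]; intro k; rw [ae_all_iff]; exact hDe k
  let W : Set (Y × Y) := ⋂ k : ℕ, ⋃ b : B, (D k b) ×ˢ (b : Set Y)
  have hWm : MeasurableSet W := by
    refine MeasurableSet.iInter fun k => MeasurableSet.iUnion fun b => (hDm k b).prod ?_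
    exact (hB.isOpen b.2).measurableSet
  let T : Set Y := {x | μ (Prod.mk x ⁻¹' W) = 0}
  have hTm : MeasurableSet T :=
    measurable_measure_prodMk_left hWm (measurableSet_singleton 0)
  let N : Set Y := {x | ¬ ∀ k b, x ∈ D k b ↔ x ∈ C (Th k b)}
  have hN : μ N = 0 := hae
  let G : Set Y := (⋃ γ ∈ S, A γ) \ N
  -- membership in `D k b` for good points
  have hmem : ∀ x ∈ G, ∀ k b, x ∈ D k b ↔ ∃ γ ∈ S, (b : Set Y) ⊆ U k γ ∧ x ∈ A γ := by
    rintro x ⟨hx, hxN⟩ k b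
    have h1 : ∀ k b, x ∈ D k b ↔ x ∈ C (Th k b) := not_not.1 hxN
    rw [h1]
    have hxE : x ∈ ⋃ γ, A γ := by
      simp only [Set.mem_iUnion] at hx ⊢
      obtain ⟨γ, _, h⟩ := hx
      exact ⟨γ, h⟩
    have h2 : x ∈ C (Th k b) ↔ x ∈ ⋃ γ ∈ Th k b, A γ := by
      rw [← hC]; exact ⟨fun h => ⟨h, hxE⟩, fun h => h.1⟩
    rw [h2]
    simp only [Set.mem_iUnion, Th, Set.mem_ofPred_eq, exists_prop, and_assoc]
  have hGT : G ⊆ T := by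
    intro x hx
    change μ (Prod.mk x ⁻¹' W) = 0
    have hle : ∀ k : ℕ, μ (Prod.mk x ⁻¹' W) ≤
        ((hpf x).toFinset.card : ENNReal) * ((k : ENNReal) + 1)⁻¹ := by
      intro k
      have hsub : Prod.mk x ⁻¹' W ⊆ ⋃ γ ∈ (hpf x).toFinset.filter (· ∈ S), U k γ := by
        intro y hy
        have hy' : (x, y) ∈ ⋃ b : B, (D k b) ×ˢ (b : Set Y) := Set.mem_iInter.1 hy k
        obtain ⟨b, hb1, hb2⟩ := Set.mem_iUnion.1 hy'
        obtain ⟨γ, hγS, hbU, hxA⟩ := (hmem x hx k b).1 hb1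
        simp only [Set.mem_iUnion]
        refine ⟨γ, ?_, hbU hb2⟩
        simp [hγS, hxA]
      calc μ (Prod.mk x ⁻¹' W) ≤ _ := measure_mono hsub
        _ ≤ ∑ γ ∈ (hpf x).toFinset.filter (· ∈ S), μ (U k γ) := measure_biUnion_finset_le _ _
        _ ≤ ∑ γ ∈ (hpf x).toFinset.filter (· ∈ S), ((k : ENNReal) + 1)⁻¹ :=
            Finset.sum_le_sum fun γ hγ => (hUS k γ (Finset.mem_filter.1 hγ).2).2
        _ = ((hpf x).toFinset.filter (· ∈ S)).card * ((k : ENNReal) + 1)⁻¹ := by simp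
        _ ≤ _ := by
            gcongr
            exact Finset.filter_subset _ _
    have hlim : Filter.Tendsto (fun k : ℕ => ((hpf x).toFinset.card : ENNReal) *
        ((k : ENNReal) + 1)⁻¹) Filter.atTop (nhds 0) := by
      have h0 : Filter.Tendsto (fun k : ℕ => ((k : ENNReal) + 1)⁻¹) Filter.atTop (nhds 0) := by
        have := (Filter.tendsto_add_atTop_iff_nat 1).2 ENNReal.tendsto_inv_nat_nhds_zero
        simpa using this
      have := ENNReal.Tendsto.const_mul (a := ((hpf x).toFinset.card : ENNReal)) h0
        (Or.inr (by finiteness))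
      simpa using this
    exact le_antisymm (ge_of_tendsto' hlim hle) zero_le
  let W' : Set (Y × Y) := W ∩ T ×ˢ Set.univ
  have hW'm : MeasurableSet W' := hWm.inter (hTm.prod MeasurableSet.univ)
  have hW'0 : (μ.prod μ) W' = 0 := by
    rw [Measure.measure_prod_null hW'm]
    refine Filter.Eventually.of_forall fun x => ?_
    by_cases hx : x ∈ T
    · exact measure_mono_null (fun y hy => hy.1) hx
    · have : Prod.mk x ⁻¹' W' = ∅ := by
        ext y; simp [W', hx]
      simp [this]
  have hW'1 : (μ.prod μ) (Prod.swap ⁻¹' W') = 0 := by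
    rw [(Measure.measurePreserving_swap (μ := μ) (ν := μ)).measure_preimage
      hW'm.nullMeasurableSet, hW'0]
  have key : ∀ x ∈ G, ∀ y ∈ G, ∀ α ∈ S, ∀ β ∈ S, x ∈ A α → y ∈ A β → β ≤ α → (x, y) ∈ W' := by
    intro x hx y hy α hα β hβ hxA hyA hle
    refine ⟨Set.mem_iInter.2 fun k => ?_, hGT hx, trivial⟩
    have hyU : y ∈ U k α := (hUS k α hα).1 (Set.mem_biUnion (show β ∈ {β | β ∈ S ∧ β ≤ α} from ⟨hβ, hle⟩) hyA)
    obtain ⟨b, hb, hyb, hbU⟩ := hB.exists_subset_of_mem_open hyU (hUo k α)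
    refine Set.mem_iUnion.2 ⟨⟨b, hb⟩, ?_, hyb⟩
    exact (hmem x hx k ⟨b, hb⟩).2 ⟨α, hα, hbU, hxA⟩
  have hGG : G ×ˢ G ⊆ W' ∪ Prod.swap ⁻¹' W' := by
    rintro ⟨x, y⟩ ⟨hx, hy⟩
    obtain ⟨α, hα, hxA⟩ := Set.mem_iUnion₂.1 hx.1
    obtain ⟨β, hβ, hyA⟩ := Set.mem_iUnion₂.1 hy.1
    rcases le_total β α with h | h
    · exact Or.inl (key x hx y hy α hα β hβ hxA hyA h)
    · exact Or.inr (key y hy x hx β hβ α hα hyA hxA h)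
  have hG0 : μ G * μ G = 0 := by
    rw [← Measure.prod_prod]
    exact measure_mono_null hGG (measure_union_null hW'0 hW'1)
  have hG : μ G = 0 := by simpa using hG0
  have hsub : (⋃ γ ∈ S, A γ) ⊆ G ∪ N := by
    intro x hx
    by_cases h : x ∈ N
    · exact Or.inr h
    · exact Or.inl ⟨hx, h⟩
  exact measure_mono_null hsub (measure_union_null hG hN)

/-- **Theorem 6.2 (measure case).** For a point-finite family of outer-null sets
whose union `E` has positive outer measure, some subunion is not the trace on `E`
of any μ-measurable set. -/
theorem pointFinite_null_family_no_measurable_trace {Y : Type*}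
    [TopologicalSpace Y] [SecondCountableTopology Y] [MeasurableSpace Y]
    [BorelSpace Y] (μ : Measure Y) [IsFiniteMeasure μ] [μ.OuterRegular]
    {Γ : Type*} (A : Γ → Set Y)
    (hpf : ∀ x : Y, {γ : Γ | x ∈ A γ}.Finite)
    (hnull : ∀ γ, μ (A γ) = 0) (hE : 0 < μ (⋃ γ, A γ)) :
    ∃ Θ : Set Γ, ¬ ∃ C : Set Y, NullMeasurableSet C μ ∧
      C ∩ (⋃ γ, A γ) = ⋃ γ ∈ Θ, A γ := by
  by_contra hcon
  push Not at hcon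
  choose C hCm hC using hcon
  classical
  obtain ⟨_, hwo⟩ := exists_wellFoundedLT Γ
  -- every strict initial segment has null union
  have hseg : ∀ α : Γ, μ (⋃ γ ∈ Set.Iio α, A γ) = 0 := by
    intro α
    induction α using WellFoundedLT.induction with
    | ind α ih =>
      refine core_aux μ A hpf (Set.Iio α) ?_ C hCm hC
      intro γ hγ
      refine measure_mono_null ?_ (measure_union_null (ih γ hγ) (hnull γ))
      intro x hx
      obtain ⟨β, ⟨_, hβ⟩, hx⟩ := Set.mem_iUnion₂.1 hx
      rcases hβ.lt_or_eq with h | h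
      · exact Or.inl (Set.mem_biUnion h hx)
      · exact Or.inr (h ▸ hx)
  have := core_aux μ A hpf Set.univ (by
      intro γ hγ
      refine measure_mono_null ?_ (measure_union_null (hseg γ) (hnull γ))
      intro x hx
      obtain ⟨β, ⟨_, hβ⟩, hx⟩ := Set.mem_iUnion₂.1 hx
      rcases hβ.lt_or_eq with h | h
      · exact Or.inl (Set.mem_biUnion h hx)
      · exact Or.inr (h ▸ hx)) C hCm hC
  simp only [Set.mem_univ, Set.iUnion_true] at this
  exact hE.ne' this
end

section
/- Let Y be a second countable topological space and let {A_γ : γ ∈ Γ} be a point-finite family of meager subsets of Y. If the union E = ⋃_{γ∈Γ} A_γ is non-meager, then there exists Θ ⊆ Γ such that there is no set C ⊆ Y having the Baire property with C ∩ E = ⋃_{γ∈Θ} A_γ. -/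
open Set Topology TopologicalSpace

/-- A meager set is avoided by a decreasing sequence of dense open sets. -/
lemma meagre_antitone_cover {Y : Type*} [TopologicalSpace Y] {s : Set Y} (hs : IsMeagre s) :
    ∃ G : ℕ → Set Y, Antitone G ∧ (∀ n, IsOpen (G n)) ∧ (∀ n, Dense (G n)) ∧
      ∀ x ∈ s, ∃ n, x ∉ G n := by
  obtain ⟨S, hSo, hSd, hSc, hS⟩ := mem_residual_iff.1 hs
  have hne : (insert univ S).Nonempty := ⟨univ, mem_insert _ _⟩
  obtain ⟨f, hf⟩ := (hSc.insert univ).exists_eq_range hne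
  have hfo : ∀ n, IsOpen (f n) := by
    intro n
    have : f n ∈ insert univ S := hf ▸ mem_range_self n
    rcases this with h | h
    · rw [h]; exact isOpen_univ
    · exact hSo _ h
  have hfd : ∀ n, Dense (f n) := by
    intro n
    have : f n ∈ insert univ S := hf ▸ mem_range_self n
    rcases this with h | h
    · rw [h]; exact dense_univ
    · exact hSd _ h
  let G : ℕ → Set Y := fun n => Nat.rec (f 0) (fun k g => g ∩ f (k + 1)) n
  have hG : ∀ n, IsOpen (G n) ∧ Dense (G n) ∧ G n ⊆ f n := by
    intro n
    induction n with
    | zero => exact ⟨hfo 0, hfd 0, subset_rfl⟩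
    | succ k ih =>
      exact ⟨ih.1.inter (hfo _), ih.2.1.inter_of_isOpen_left (hfd _) ih.1, inter_subset_right⟩
  refine ⟨G, antitone_nat_of_succ_le fun n => inter_subset_left, fun n => (hG n).1,
    fun n => (hG n).2.1, ?_⟩
  intro x hx
  by_contra! hcon
  refine hS (a := x) ?_ hx
  intro t ht
  have : t ∈ range f := hf ▸ mem_insert_of_mem _ ht
  obtain ⟨n, rfl⟩ := this
  exact (hG n).2.2 (hcon n)

lemma core_no_trace {Y : Type*} [TopologicalSpace Y] [SecondCountableTopology Y]
    {Γ : Type*} [LinearOrder Γ] (A : Γ → Set Y)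
    (hpf : ∀ x : Y, {γ : Γ | x ∈ A γ}.Finite)
    (hmeager : ∀ γ, IsMeagre (A γ)) (hE : ¬ IsMeagre (⋃ γ, A γ))
    (hinit : ∀ γ, IsMeagre (⋃ δ : {δ // δ < γ}, A δ.1))
    (htr : ∀ Θ : Set Γ, ∃ C : Set Y, HasBaireProperty C ∧ C ∩ (⋃ γ, A γ) = ⋃ γ ∈ Θ, A γ) :
    False := by
  choose G hGanti hGo hGd hGc using fun γ => meagre_antitone_cover (hinit γ)
  let ι := {b : Set Y // b ∈ countableBasis Y}
  have : Countable ι := (countable_countableBasis Y).to_subtype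
  have hB := isBasis_countableBasis Y
  have hBo : ∀ k : ι, IsOpen k.1 := fun k => hB.isOpen k.2
  choose C hC hCE using fun (p : ℕ × ι) => htr {γ | p.2.1 ⊆ G γ p.1}
  choose U hUo hUm using hC
  set E := ⋃ γ, A γ with hEdef
  -- remove the error terms
  let M : Set Y := ⋃ p, symmDiff (C p) (U p)
  have hM : IsMeagre M := isMeagre_iUnion hUm
  have hCU : ∀ y ∉ M, ∀ p, y ∈ C p ↔ y ∈ U p := by
    intro y hy p
    have : y ∉ symmDiff (C p) (U p) := fun h => hy (mem_iUnion.2 ⟨p, h⟩)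
    rw [mem_symmDiff] at this
    tauto
  let R : Set Y := ⋃ j : {j : ι // IsMeagre ((E \ M) ∩ j.1)}, (E \ M) ∩ j.1.1
  have hR : IsMeagre R := isMeagre_iUnion fun j => j.2
  -- sections
  let V : ℕ → Y → Set Y := fun n z => ⋃ k : {k : ι // z ∈ k.1}, U (n, k.1)
  have hVo : ∀ n z, IsOpen (V n z) := fun n z => isOpen_iUnion fun k => hUo _
  let F : Set Y := (E \ M) \ R
  let Z : ℕ × {j : ι // (j.1 ∩ F).Nonempty} → Set Y :=
    fun p => {z | (p.2.1.1 ∩ V p.1 z).Nonempty}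
  have hZ : ∀ p, Z p ∈ residual Y := by
    rintro ⟨n, j, y, hyj, ⟨hyE, hyM⟩, hyR⟩
    obtain ⟨γ, hγ⟩ := mem_iUnion.1 hyE
    refine Filter.mem_of_superset (residual_of_dense_open (hGo γ n) (hGd γ n)) ?_
    intro z hz
    obtain ⟨k, hk, hzk, hkG⟩ := hB.exists_subset_of_mem_open hz (hGo γ n)
    refine ⟨y, hyj, mem_iUnion.2 ⟨⟨⟨k, hk⟩, hzk⟩, ?_⟩⟩
    refine (hCU y hyM _).1 ?_
    have : y ∈ C (n, ⟨k, hk⟩) ∩ E := by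
      rw [hCE]
      exact mem_biUnion (show γ ∈ {γ | k ⊆ G γ n} from hkG) hγ
    exact this.1
  have hZm : IsMeagre (⋂ p, Z p)ᶜ := by
    rw [IsMeagre, compl_compl]
    exact countable_iInter_mem.2 hZ
  obtain ⟨z, hzE, hzZ⟩ : ∃ z ∈ E, z ∈ ⋂ p, Z p := by
    by_contra! hcon
    exact hE (hZm.mono hcon)
  rw [mem_iInter] at hzZ
  obtain ⟨δ, hδ⟩ := mem_iUnion.1 hzE
  -- the complement of each section is nowhere dense relative to F
  have hnd : ∀ n, IsMeagre (F \ V n z) := by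
    intro n
    apply IsNowhereDense.isMeagre
    rw [IsNowhereDense, eq_empty_iff_forall_notMem]
    intro x hx
    obtain ⟨b, hb, hxb, hbs⟩ := hB.exists_subset_of_mem_open hx isOpen_interior
    have hbo := hB.isOpen hb
    have hbcl : b ⊆ closure (F \ V n z) := hbs.trans interior_subset
    obtain ⟨y, hyb, hyF, -⟩ := mem_closure_iff.1 (hbcl hxb) b hbo hxb
    obtain ⟨w, hwb, hwV⟩ := hzZ (n, ⟨⟨b, hb⟩, y, hyb, hyF⟩)
    obtain ⟨v, hv1, hv2⟩ := mem_closure_iff.1 (hbcl hwb) _ (hVo n z) hwV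
    exact hv2.2 hv1
  apply hE
  refine (((hM.union hR).union (isMeagre_iUnion hnd)).union
    ((hinit δ).union (hmeager δ))).mono ?_
  intro y hyE
  by_contra hy
  simp only [mem_union, not_or] at hy
  obtain ⟨⟨⟨hyM, hyR⟩, hyV⟩, hy1, hy2⟩ := hy
  have hyF : y ∈ F := ⟨⟨hyE, hyM⟩, hyR⟩
  have hyV' : ∀ n, y ∈ V n z := by
    intro n
    by_contra h
    exact hyV (mem_iUnion.2 ⟨n, hyF, h⟩)
  have hlt : ∀ γ, y ∈ A γ → δ < γ := by
    intro γ hγ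
    by_contra h
    rcases (not_lt.1 h).lt_or_eq with h | h
    · exact hy1 (mem_iUnion.2 ⟨⟨γ, h⟩, hγ⟩)
    · exact hy2 (h ▸ hγ)
  have hex : ∀ γ, ∃ n, y ∈ A γ → z ∉ G γ n := by
    intro γ
    by_cases hγ : y ∈ A γ
    · obtain ⟨n, hn⟩ := hGc γ z (mem_iUnion.2 ⟨⟨δ, hlt γ hγ⟩, hδ⟩)
      exact ⟨n, fun _ => hn⟩
    · exact ⟨0, fun h => absurd h hγ⟩
  choose N hN using hex
  obtain ⟨n, hn⟩ := ((hpf y).image N).bddAbove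
  obtain ⟨⟨k, hzk⟩, hyU⟩ := mem_iUnion.1 (hyV' n)
  have hyC : y ∈ C (n, k) ∩ E := ⟨(hCU y hyM _).2 hyU, hyE⟩
  rw [hCE] at hyC
  obtain ⟨γ, hγΘ, hγ⟩ := mem_iUnion₂.1 hyC
  have hle : N γ ≤ n := hn (mem_image_of_mem N hγ)
  exact hN γ hγ (hGanti γ hle (hγΘ hzk))

/-- **Theorem 6.2 (Baire case).** For a point-finite family of meager sets whose
union `E` is non-meager, some subunion is not the trace on `E` of any set with
the Baire property. -/
theorem pointFinite_meager_family_no_baire_trace {Y : Type*}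
    [TopologicalSpace Y] [SecondCountableTopology Y]
    {Γ : Type*} (A : Γ → Set Y)
    (hpf : ∀ x : Y, {γ : Γ | x ∈ A γ}.Finite)
    (hmeager : ∀ γ, IsMeagre (A γ)) (hE : ¬ IsMeagre (⋃ γ, A γ)) :
    ∃ Θ : Set Γ, ¬ ∃ C : Set Y, HasBaireProperty C ∧
      C ∩ (⋃ γ, A γ) = ⋃ γ ∈ Θ, A γ := by
  by_contra! htr
  obtain ⟨_, _⟩ := exists_wellFoundedLT Γ
  by_cases hinit : ∀ γ, IsMeagre (⋃ δ : {δ // δ < γ}, A δ.1)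
  · exact core_no_trace A hpf hmeager hE hinit htr
  · push Not at hinit
    let S : Set Γ := {γ | ¬ IsMeagre (⋃ δ : {δ // δ < γ}, A δ.1)}
    obtain ⟨γ, hγ, hmin⟩ := WellFounded.has_min (wellFounded_lt (α := Γ)) S hinit
    refine core_no_trace (Γ := {δ // δ < γ}) (fun δ => A δ.1) ?_ (fun δ => hmeager _) hγ ?_ ?_
    · intro x
      exact (hpf x).preimage Subtype.val_injective.injOn
    · intro δ
      have h : IsMeagre (⋃ ε : {ε // ε < δ.1}, A ε.1) := by
        by_contra h
        exact hmin δ.1 h δ.2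
      refine h.mono ?_
      intro x hx
      obtain ⟨ε, hε⟩ := mem_iUnion.1 hx
      exact mem_iUnion.2 ⟨⟨ε.1.1, ε.2⟩, hε⟩
    · intro Θ
      obtain ⟨C, hC, hCE⟩ := htr (Subtype.val '' Θ)
      refine ⟨C, hC, ?_⟩
      ext x
      have hx := Set.ext_iff.1 hCE x
      simp only [mem_inter_iff, mem_iUnion, mem_image, exists_prop] at hx ⊢
      constructor
      · rintro ⟨h1, δ, h2⟩
        obtain ⟨_, ⟨ε, hε, rfl⟩, h3⟩ := hx.1 ⟨h1, δ.1, h2⟩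
        exact ⟨ε, hε, h3⟩
      · rintro ⟨ε, hε, h3⟩
        exact ⟨(hx.2 ⟨ε.1, ⟨ε, hε, rfl⟩, h3⟩).1, ε, h3⟩
end
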